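/- arXiv:2507.05214 — 4 statements merged into one kernel-verified Lean document; each statement's English description precedes it below -/
import Mathlib

section
/- For the normal means model y_i = θ_i + ε_i, ε_i i.i.d. N(0,1), i = 1,…,n, with Dirichlet–Laplace prior of parameter a > 0, let p(θ,ψ,τ,φ | y) denote the joint posterior density with respect to the product of Lebesgue measure on ℝⁿ (for θ), on (0,∞)ⁿ (for ψ), on (0,∞) (for τ), and (n−1)-dimensional Lebesgue measure on the open simplex (for φ). Define the transition density of the wrong-order Gibbs sampler (Algorithm 1) by K(θ₀,ψ₀,τ₀,φ₀ ; θ′,ψ′,τ′,φ′) = p(θ′ | ψ₀,τ₀,φ₀, y) · p(ψ′ | θ′, τ₀, φ₀) · p(τ′ | θ′, φ₀) · p(φ′ | θ′), where each conditional density is the ratio of the appropriate joint posterior density to the corresponding marginal posterior density. Then the posterior is not invariant under K: the function (θ′,ψ′,τ′,φ′) ↦ ∫ K(θ₀,ψ₀,τ₀,φ₀ ; θ′,ψ′,τ′,φ′) p(θ₀,ψ₀,τ₀,φ₀ | y) dθ₀ dψ₀ dτ₀ dφ₀ differs from p(θ′,ψ′,τ′,φ′ | y) on a set of positive measure; consequently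 any stationary density q of this kernel satisfies q ≠ p(·,·,·,· | y). -/
/-!
The integral of `K(x₀ ; x′) p(x₀)` over `x₀` is never computed: only its dependence on `x′`
matters. The last factor `p(φ′ ∣ θ′)` of `K` does not involve `x₀`, so it comes out of the
integral, and the image of the posterior under one step has the form `F(θ, ψ, τ) G(θ, φ)`
(`step_factor`). When `n = 1`, `φ` is constant, `p(τ′ ∣ θ′)` comes out as well, and the image has
the form `F(θ, ψ) G(θ, τ)` (`step_factor_zero`).

The posterior density has neither form, even almost everywhere (`not_ae_factor`,
`not_ae_factor_zero`). A factorized function satisfies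
`p(ψ₁, s₁) p(ψ₂, s₂) = p(ψ₁, s₂) p(ψ₂, s₁)` for the relevant variable `s` (`φ`, respectively `τ`).
Every factor of the posterior density splits except `exp (-∑ θ_i² / (2 ψ_i τ² φ_i²))`
(`post_split`), so the identity forces the mixed difference `cross` of the exponent to vanish
(`cross_eq_zero`). But `cross` is nonzero at an explicit point, hence on a neighbourhood of it,
and Fubini lets the four states be chosen in that neighbourhood among those where the
factorization holds.

All this is meaningful only if the normalizing constant `Z` is not the junk value `0` of a
divergent integral (`Z_pos`). The likelihood is bounded, so it is enough that the prior is
integrable (`integrable_post`): the Gaussian densities in `θ` integrate to one, and the exponential,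
gamma and Dirichlet densities are integrable. The Dirichlet integral is treated by induction on
the dimension, integrating out one coordinate by a beta integral (`lintegral_dirichlet_lt_top`).
-/


open MeasureTheory Real
open scoped Classical

namespace DLNormalMeans

/-- The state space of the Gibbs sampler for the normal means problem of dimension
`n = m + 1`: the mean `θ ∈ ℝⁿ`, the local scales `ψ` (constrained to `(0,∞)ⁿ` by the
density), the global scale `τ` (constrained to `(0,∞)`), and the Dirichlet weights `φ`,
parametrized by their first `n − 1 = m` coordinates `u` (so that the `(n−1)`-dimensional
Lebesgue measure on the open simplex is Lebesgue measure on `u`). -/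
abbrev E (m : ℕ) := (Fin (m + 1) → ℝ) × (Fin (m + 1) → ℝ) × ℝ × (Fin m → ℝ)

/-- The full simplex vector `φ = (u_1, …, u_m, 1 − Σ u_i)` from its free coordinates. -/
noncomputable def phiFull (m : ℕ) (u : Fin m → ℝ) : Fin (m + 1) → ℝ :=
  Fin.snoc u (1 - ∑ i, u i)

/-- Membership of the free coordinates in the open simplex. -/
def inSimplex (m : ℕ) (u : Fin m → ℝ) : Prop := (∀ i, 0 < u i) ∧ ∑ i, u i < 1

/-- The unnormalized joint posterior density (likelihood times Dirichlet–Laplace prior of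
parameter `a`) of `(θ, ψ, τ, φ)` given the data `y` in the normal means model
`y_i = θ_i + ε_i`, `ε_i ~ N(0,1)` i.i.d., with respect to the product of Lebesgue measures
described in `E`. -/
noncomputable def post (m : ℕ) (a : ℝ) (y : Fin (m + 1) → ℝ) (x : E m) : ℝ :=
  let θ := x.1; let ψ := x.2.1; let τ := x.2.2.1; let u := x.2.2.2
  let φ := phiFull m u
  (if (∀ i, 0 < ψ i) ∧ 0 < τ ∧ inSimplex m u then (1 : ℝ) else 0) *
    (∏ i, (2 * π) ^ (-(1 : ℝ) / 2) * Real.exp (-(y i - θ i) ^ 2 / 2)) *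
    (∏ i, (2 * π * ψ i * τ ^ 2 * φ i ^ 2) ^ (-(1 : ℝ) / 2) *
      Real.exp (-(θ i) ^ 2 / (2 * ψ i * τ ^ 2 * φ i ^ 2))) *
    (∏ i, (1 / 2 : ℝ) * Real.exp (-ψ i / 2)) *
    (((1 / 2 : ℝ) ^ (((m : ℝ) + 1) * a) / Real.Gamma (((m : ℝ) + 1) * a)) *
      τ ^ (((m : ℝ) + 1) * a - 1) * Real.exp (-τ / 2)) *
    ((Real.Gamma (((m : ℝ) + 1) * a) / ∏ _i : Fin (m + 1), Real.Gamma a) *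
      ∏ i, φ i ^ (a - 1))

/-- The normalizing constant of the posterior. -/
noncomputable def Z (m : ℕ) (a : ℝ) (y : Fin (m + 1) → ℝ) : ℝ := ∫ x : E m, post m a y x

/-- The joint posterior density `p(θ, ψ, τ, φ ∣ y)`. -/
noncomputable def p (m : ℕ) (a : ℝ) (y : Fin (m + 1) → ℝ) (x : E m) : ℝ :=
  post m a y x / Z m a y

/-- Marginal posterior density `p(ψ, τ, φ ∣ y)`. -/
noncomputable def pψτφ (m : ℕ) (a : ℝ) (y : Fin (m + 1) → ℝ)
    (ψ : Fin (m + 1) → ℝ) (τ : ℝ) (u : Fin m → ℝ) : ℝ :=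
  ∫ θ : Fin (m + 1) → ℝ, p m a y (θ, ψ, τ, u)

/-- Marginal posterior density `p(θ, τ, φ ∣ y)`. -/
noncomputable def pθτφ (m : ℕ) (a : ℝ) (y : Fin (m + 1) → ℝ)
    (θ : Fin (m + 1) → ℝ) (τ : ℝ) (u : Fin m → ℝ) : ℝ :=
  ∫ ψ : Fin (m + 1) → ℝ, p m a y (θ, ψ, τ, u)

/-- Marginal posterior density `p(θ, φ ∣ y)`. -/
noncomputable def pθφ (m : ℕ) (a : ℝ) (y : Fin (m + 1) → ℝ)
    (θ : Fin (m + 1) → ℝ) (u : Fin m → ℝ) : ℝ :=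
  ∫ w : (Fin (m + 1) → ℝ) × ℝ, p m a y (θ, w.1, w.2, u)

/-- Marginal posterior density `p(θ ∣ y)`. -/
noncomputable def pθ (m : ℕ) (a : ℝ) (y : Fin (m + 1) → ℝ) (θ : Fin (m + 1) → ℝ) : ℝ :=
  ∫ w : (Fin (m + 1) → ℝ) × ℝ × (Fin m → ℝ), p m a y (θ, w.1, w.2.1, w.2.2)

/-- The transition density of the wrong-order Gibbs sampler (Algorithm 1):
`K(θ₀,ψ₀,τ₀,φ₀ ; θ′,ψ′,τ′,φ′) =
  p(θ′ ∣ ψ₀,τ₀,φ₀, y) · p(ψ′ ∣ θ′, τ₀, φ₀) · p(τ′ ∣ θ′, φ₀) · p(φ′ ∣ θ′)`,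
each conditional density being the ratio of the appropriate joint posterior density to the
corresponding marginal posterior density. -/
noncomputable def K (m : ℕ) (a : ℝ) (y : Fin (m + 1) → ℝ) (x₀ x' : E m) : ℝ :=
  (p m a y (x'.1, x₀.2.1, x₀.2.2.1, x₀.2.2.2) / pψτφ m a y x₀.2.1 x₀.2.2.1 x₀.2.2.2) *
    (p m a y (x'.1, x'.2.1, x₀.2.2.1, x₀.2.2.2) / pθτφ m a y x'.1 x₀.2.2.1 x₀.2.2.2) *
    (pθτφ m a y x'.1 x'.2.2.1 x₀.2.2.2 / pθφ m a y x'.1 x₀.2.2.2) *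
    (pθφ m a y x'.1 x'.2.2.2 / pθ m a y x'.1)

lemma measurableSet_inSimplex (m : ℕ) : MeasurableSet {u : Fin m → ℝ | inSimplex m u} := by
  unfold inSimplex
  measurability

/-! ### The Dirichlet integral -/

/-- The scaled beta integral `∫₀ʳ x^(a-1) (r-x)^(b-1) dx = r^(a+b-1) B(a,b)`, as an upper bound. -/
lemma lintegral_scaled_beta_le {a b r : ℝ} (ha : 0 < a) (hb : 0 < b) (hr : 0 < r) :
    ∫⁻ x : ℝ, ENNReal.ofReal (if 0 < x ∧ x < r then x ^ (a - 1) * (r - x) ^ (b - 1) else 0)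
      ≤ ENNReal.ofReal (ProbabilityTheory.beta a b) * ENNReal.ofReal (r ^ (a + b - 1)) := by
  have hB := ProbabilityTheory.beta_pos ha hb
  have hl := ProbabilityTheory.lintegral_betaPDF_eq_one ha hb
  have hnn : ∀ x, 0 ≤ ProbabilityTheory.betaPDFReal a b x := by
    intro x
    by_cases hx : 0 < x ∧ x < 1
    · exact (ProbabilityTheory.betaPDFReal_pos hx.1 hx.2 ha hb).le
    · simp [ProbabilityTheory.betaPDFReal, hx]
  have hint : Integrable (ProbabilityTheory.betaPDFReal a b) := by
    refine ⟨by fun_prop, ?_⟩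
    rw [hasFiniteIntegral_iff_ofReal (Filter.Eventually.of_forall hnn)]
    change ∫⁻ x, ProbabilityTheory.betaPDF a b x < ⊤
    rw [hl]; exact ENNReal.one_lt_top
  have hone : ∫ x, ProbabilityTheory.betaPDFReal a b x = 1 := by
    rw [integral_eq_lintegral_of_nonneg_ae (Filter.Eventually.of_forall hnn) (by fun_prop)]
    change (∫⁻ x, ProbabilityTheory.betaPDF a b x).toReal = 1
    rw [hl]; simp
  have heq : ∀ x : ℝ, (if 0 < x ∧ x < r then x ^ (a - 1) * (r - x) ^ (b - 1) else 0) =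
      (ProbabilityTheory.beta a b * r ^ (a + b - 2)) *
        ProbabilityTheory.betaPDFReal a b (x / r) := by
    intro x
    have h1 : (0 < x / r ∧ x / r < 1) ↔ (0 < x ∧ x < r) := by
      rw [div_pos_iff_of_pos_right hr, div_lt_one hr]
    unfold ProbabilityTheory.betaPDFReal
    simp only [h1]
    split_ifs with hx
    · have h2 : 1 - x / r = (r - x) / r := by field_simp
      rw [h2, div_rpow hx.1.le hr.le, div_rpow (by linarith [hx.2]) hr.le,
        show a + b - 2 = (a - 1) + (b - 1) by ring, rpow_add hr]
      have := (rpow_pos_of_pos hr (a - 1)).ne'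
      have := (rpow_pos_of_pos hr (b - 1)).ne'
      field_simp
    · simp
  simp_rw [heq]
  have hc : 0 ≤ ProbabilityTheory.beta a b * r ^ (a + b - 2) := by positivity
  rw [← ofReal_integral_eq_lintegral_ofReal ((hint.comp_div hr.ne').const_mul _)
    (Filter.Eventually.of_forall fun x => mul_nonneg hc (hnn _)), integral_const_mul,
    Measure.integral_comp_div, hone, ← ENNReal.ofReal_mul hB.le]
  apply ENNReal.ofReal_le_ofReal
  rw [abs_of_pos hr, smul_eq_mul, mul_one, mul_assoc, show a + b - 1 = (a + b - 2) + 1 by ring,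
    rpow_add hr, rpow_one]

lemma inSimplex_cons {m : ℕ} (x : ℝ) (v : Fin m → ℝ) :
    inSimplex (m + 1) (Fin.cons x v : Fin (m + 1) → ℝ) ↔
      inSimplex m v ∧ 0 < x ∧ x < 1 - ∑ i, v i := by
  simp only [inSimplex, Fin.forall_fin_succ, Fin.sum_univ_succ, Fin.cons_zero, Fin.cons_succ]
  constructor
  · rintro ⟨⟨h1, h2⟩, h3⟩
    exact ⟨⟨h2, by linarith⟩, h1, by linarith⟩
  · rintro ⟨⟨h1, _⟩, h2, h3⟩
    exact ⟨⟨h2, h1⟩, by linarith⟩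

/-- Finiteness of the Dirichlet integral with exponents `(a, …, a, b)`. The last exponent is
left free so that integrating out one coordinate, which replaces `b` by `a + b`, gives an
induction on the dimension. -/
lemma lintegral_dirichlet_lt_top {a : ℝ} (ha : 0 < a) (m : ℕ) : ∀ b : ℝ, 0 < b →
    ∫⁻ u : Fin m → ℝ, ENNReal.ofReal (if inSimplex m u then
      (∏ i, u i ^ (a - 1)) * (1 - ∑ i, u i) ^ (b - 1) else 0) < ⊤ := by
  induction m with
  | zero =>
    intro b hb
    rw [volume_pi, Measure.pi_of_empty, lintegral_dirac]
    exact ENNReal.ofReal_lt_top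
  | succ m ih =>
    intro b hb
    have hmeas : ∀ (k : ℕ) (c : ℝ), Measurable fun u : Fin k → ℝ =>
        ENNReal.ofReal (if inSimplex k u then
          (∏ i, u i ^ (a - 1)) * (1 - ∑ i, u i) ^ (c - 1) else 0) := by
      intro k c
      refine (Measurable.ite (measurableSet_inSimplex k) ?_ measurable_const).ennreal_ofReal
      fun_prop
    rw [← ((volume_preserving_piFinSuccAbove (fun _ : Fin (m + 1) => ℝ) 0).symm).lintegral_comp
      (hmeas (m + 1) b), Measure.volume_eq_prod, lintegral_prod_symm]
    swap
    · exact ((hmeas (m + 1) b).comp (MeasurableEquiv.measurable _)).aemeasurable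
    refine lt_of_le_of_lt (b := ∫⁻ v : Fin m → ℝ, ENNReal.ofReal (ProbabilityTheory.beta a b) *
      ENNReal.ofReal (if inSimplex m v then
        (∏ i, v i ^ (a - 1)) * (1 - ∑ i, v i) ^ ((a + b) - 1) else 0)) ?_ ?_
    · refine lintegral_mono fun v => ?_
      simp only [MeasurableEquiv.piFinSuccAbove_symm_apply, Fin.insertNthEquiv, Equiv.coe_fn_mk,
        Fin.insertNth_zero', Fin.prod_univ_succ, Fin.sum_univ_succ, Fin.cons_zero, Fin.cons_succ,
        inSimplex_cons]
      by_cases hv : inSimplex m v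
      · have hP : 0 ≤ ∏ i, v i ^ (a - 1) :=
          Finset.prod_nonneg fun i _ => rpow_nonneg (hv.1 i).le _
        rw [if_pos hv, ENNReal.ofReal_mul hP, mul_left_comm]
        refine le_trans ?_ (mul_le_mul_right
          (lintegral_scaled_beta_le ha hb (sub_pos.2 hv.2)) _)
        rw [← lintegral_const_mul' _ _ ENNReal.ofReal_ne_top]
        refine lintegral_mono fun x => ?_
        rw [← ENNReal.ofReal_mul hP]
        apply ENNReal.ofReal_le_ofReal
        simp only [hv, true_and]
        split_ifs
        · rw [show 1 - (x + ∑ i, v i) = 1 - ∑ i, v i - x by ring]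
          apply le_of_eq; ring
        · simp
      · rw [if_neg hv]
        refine le_of_eq_of_le (b := ∫⁻ _ : ℝ, 0) (lintegral_congr fun x => ?_) (by simp)
        simp [hv]
    · rw [lintegral_const_mul' _ _ ENNReal.ofReal_ne_top]
      exact ENNReal.mul_lt_top ENNReal.ofReal_lt_top (ih (a + b) (by linarith))

/-- The (unnormalized) Dirichlet density is integrable on the simplex. -/
lemma integrable_dirichlet {a : ℝ} (ha : 0 < a) (m : ℕ) :
    Integrable fun u : Fin m → ℝ => if inSimplex m u then ∏ i, phiFull m u i ^ (a - 1) else 0 := by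
  have heq : (fun u : Fin m → ℝ => if inSimplex m u then ∏ i, phiFull m u i ^ (a - 1) else 0) =
      fun u => if inSimplex m u then (∏ i, u i ^ (a - 1)) * (1 - ∑ i, u i) ^ (a - 1) else 0 := by
    funext u
    simp [phiFull, Fin.prod_univ_castSucc]
  rw [heq]
  refine ⟨(Measurable.ite (measurableSet_inSimplex m) (by fun_prop)
    measurable_const).aestronglyMeasurable, ?_⟩
  rw [hasFiniteIntegral_iff_ofReal]
  · exact lintegral_dirichlet_lt_top ha m a ha
  · refine Filter.Eventually.of_forall fun u => ?_
    dsimp only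
    split_ifs with hu
    · exact mul_nonneg (Finset.prod_nonneg fun i _ => rpow_nonneg (hu.1 i).le _)
        (rpow_nonneg (sub_pos.2 hu.2).le _)
    · simp

lemma measurable_phiFull (m : ℕ) (i : Fin (m + 1)) :
    Measurable fun u : Fin m → ℝ => phiFull m u i := by
  refine Fin.lastCases ?_ (fun j => ?_) i
  · simp only [phiFull, Fin.snoc_last]; fun_prop
  · simp only [phiFull, Fin.snoc_castSucc]; fun_prop

lemma phiFull_pos {m : ℕ} {u : Fin m → ℝ} (hu : inSimplex m u) (i : Fin (m + 1)) :
    0 < phiFull m u i := by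
  refine Fin.lastCases ?_ (fun j => ?_) i
  · simp only [phiFull, Fin.snoc_last]; exact sub_pos.2 hu.2
  · simp only [phiFull, Fin.snoc_castSucc]; exact hu.1 j

/-! ### Integrability of the posterior density -/

lemma measurable_post (m : ℕ) (a : ℝ) (y : Fin (m + 1) → ℝ) : Measurable (post m a y) := by
  have hφ : ∀ i, Measurable fun x : E m => phiFull m x.2.2.2 i := fun i =>
    (measurable_phiFull m i).comp (by fun_prop)
  have hS : MeasurableSet {x : E m | (∀ i, 0 < x.2.1 i) ∧ 0 < x.2.2.1 ∧ inSimplex m x.2.2.2} := by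
    refine MeasurableSet.inter ?_ (MeasurableSet.inter ?_ ?_)
    · change MeasurableSet {x : E m | ∀ i, 0 < x.2.1 i}
      simp only [measurableSet_setOfPred]
      exact Measurable.forall fun i => measurableSet_setOfPred.1
        (measurableSet_lt measurable_const (by fun_prop))
    · exact measurableSet_lt measurable_const (measurable_snd.snd.fst : Measurable fun x : E m => x.2.2.1)
    · exact (measurableSet_inSimplex m).preimage (by fun_prop : Measurable fun x : E m => x.2.2.2)
  unfold post
  dsimp only
  refine Measurable.mul (Measurable.mul (Measurable.mul (Measurable.mul (Measurable.mul
    (Measurable.ite hS measurable_const measurable_const) ?_) ?_) ?_) ?_) ?_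
  all_goals fun_prop

lemma post_pos {m : ℕ} {a : ℝ} (ha : 0 < a) (y θ : Fin (m + 1) → ℝ) {ψ : Fin (m + 1) → ℝ} {τ : ℝ}
    {u : Fin m → ℝ} (hψ : ∀ i, 0 < ψ i) (hτ : 0 < τ) (hu : inSimplex m u) :
    0 < post m a y (θ, ψ, τ, u) := by
  have hφ := phiFull_pos hu
  have hG : 0 < Real.Gamma (((m : ℝ) + 1) * a) := Real.Gamma_pos_of_pos (by positivity)
  have hG' := Real.Gamma_pos_of_pos ha
  unfold post
  dsimp only
  rw [if_pos ⟨hψ, hτ, hu⟩]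
  have h1 : 0 < ∏ i, (2 * π) ^ (-(1 : ℝ) / 2) * Real.exp (-(y i - θ i) ^ 2 / 2) :=
    Finset.prod_pos fun i _ => by positivity
  have h2 : 0 < ∏ i, (2 * π * ψ i * τ ^ 2 * phiFull m u i ^ 2) ^ (-(1 : ℝ) / 2) *
      Real.exp (-(θ i) ^ 2 / (2 * ψ i * τ ^ 2 * phiFull m u i ^ 2)) :=
    Finset.prod_pos fun i _ => by have := hφ i; have := hψ i; positivity
  have h3 : 0 < ∏ i, (1 / 2 : ℝ) * Real.exp (-ψ i / 2) :=
    Finset.prod_pos fun i _ => by positivity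
  have h4 : 0 < ∏ i, phiFull m u i ^ (a - 1) :=
    Finset.prod_pos fun i _ => rpow_pos_of_pos (hφ i) _
  have h5 : 0 < ∏ _i : Fin (m + 1), Real.Gamma a := Finset.prod_pos fun i _ => hG'
  positivity

lemma post_nonneg {m : ℕ} {a : ℝ} (ha : 0 < a) (y : Fin (m + 1) → ℝ) (x : E m) :
    0 ≤ post m a y x := by
  obtain ⟨θ, ψ, τ, u⟩ := x
  by_cases h : (∀ i, 0 < ψ i) ∧ 0 < τ ∧ inSimplex m u
  · exact (post_pos ha y θ h.1 h.2.1 h.2.2).le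
  · unfold post; dsimp only; rw [if_neg h]; simp

/-- The part of the prior density not involving `θ`, up to a constant factor. -/
noncomputable def hyper (m : ℕ) (a : ℝ) (w : (Fin (m + 1) → ℝ) × ℝ × (Fin m → ℝ)) : ℝ :=
  (∏ i, if 0 < w.1 i then Real.exp (-w.1 i / 2) else 0) *
    ((if 0 < w.2.1 then w.2.1 ^ (((m : ℝ) + 1) * a - 1) * Real.exp (-w.2.1 / 2) else 0) *
      (if inSimplex m w.2.2 then ∏ i, phiFull m w.2.2 i ^ (a - 1) else 0))

lemma integrable_hyper (m : ℕ) {a : ℝ} (ha : 0 < a) : Integrable (hyper m a) := by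
  have key : ∀ s : ℝ, -1 < s →
      Integrable fun x : ℝ => if 0 < x then x ^ s * Real.exp (-x / 2) else 0 := by
    intro s hs
    have h := integrableOn_rpow_mul_exp_neg_mul_rpow (p := 1) (s := s) (b := 1 / 2) hs one_pos
      (by norm_num)
    rw [← integrable_indicator_iff measurableSet_Ioi] at h
    refine h.congr (Filter.Eventually.of_forall fun x => ?_)
    simp only [Set.indicator, Set.mem_Ioi, rpow_one]
    congr 3
    ring
  have h0 : Integrable fun x : ℝ => if 0 < x then Real.exp (-x / 2) else 0 := by
    simpa using key 0 (by norm_num)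
  have h1 : Integrable fun ψ : Fin (m + 1) → ℝ =>
      ∏ i, if 0 < ψ i then Real.exp (-ψ i / 2) else 0 :=
    Integrable.fintype_prod (f := fun _ x => if 0 < x then Real.exp (-x / 2) else 0) fun _ => h0
  have hpos : 0 < ((m : ℝ) + 1) * a := by positivity
  exact h1.mul_prod ((key _ (by linarith)).mul_prod (integrable_dirichlet ha m))

/-- The likelihood is at most one, so the posterior density is dominated by the prior density:
a product of centred Gaussian densities in `θ` times the density of the other variables. -/
lemma post_le {m : ℕ} {a : ℝ} (ha : 0 < a) (y : Fin (m + 1) → ℝ) :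
    ∃ C : ℝ, 0 ≤ C ∧ ∀ (θ : Fin (m + 1) → ℝ) (w : (Fin (m + 1) → ℝ) × ℝ × (Fin m → ℝ)),
      post m a y (θ, w) ≤ C * hyper m a w * ∏ i, ProbabilityTheory.gaussianPDFReal 0
        (Real.toNNReal (w.1 i * w.2.1 ^ 2 * phiFull m w.2.2 i ^ 2)) (θ i) := by
  have hG : 0 < Real.Gamma (((m : ℝ) + 1) * a) := Real.Gamma_pos_of_pos (by positivity)
  have hG' : 0 < ∏ _i : Fin (m + 1), Real.Gamma a :=
    Finset.prod_pos fun i _ => Real.Gamma_pos_of_pos ha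
  refine ⟨((1 / 2 : ℝ) ^ (((m : ℝ) + 1) * a) / Real.Gamma (((m : ℝ) + 1) * a)) *
    (Real.Gamma (((m : ℝ) + 1) * a) / ∏ _i : Fin (m + 1), Real.Gamma a), by positivity, ?_⟩
  rintro θ ⟨ψ, τ, u⟩
  have hg : 0 ≤ ∏ i, ProbabilityTheory.gaussianPDFReal 0
        (Real.toNNReal (ψ i * τ ^ 2 * phiFull m u i ^ 2)) (θ i) :=
    Finset.prod_nonneg fun i _ => ProbabilityTheory.gaussianPDFReal_nonneg _ _ _
  by_cases h : (∀ i, 0 < ψ i) ∧ 0 < τ ∧ inSimplex m u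
  · have hφ := phiFull_pos h.2.2
    have hτ := h.2.1
    have e1 : ∏ i, (2 * π) ^ (-(1 : ℝ) / 2) * Real.exp (-(y i - θ i) ^ 2 / 2) ≤ 1 := by
      refine Finset.prod_le_one (fun i _ => by positivity) fun i _ => ?_
      refine mul_le_one₀ ?_ (by positivity) ?_
      · exact rpow_le_one_of_one_le_of_nonpos (by linarith [Real.pi_gt_three]) (by norm_num)
      · exact Real.exp_le_one_iff.2 (by nlinarith [sq_nonneg (y i - θ i)])
    have e2 : ∏ i, (1 / 2 : ℝ) * Real.exp (-ψ i / 2) ≤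
        ∏ i, if 0 < ψ i then Real.exp (-ψ i / 2) else 0 := by
      refine Finset.prod_le_prod (fun i _ => by positivity) fun i _ => ?_
      rw [if_pos (h.1 i)]
      linarith [Real.exp_pos (-ψ i / 2)]
    have e3 : ∏ i, (2 * π * ψ i * τ ^ 2 * phiFull m u i ^ 2) ^ (-(1 : ℝ) / 2) *
        Real.exp (-(θ i) ^ 2 / (2 * ψ i * τ ^ 2 * phiFull m u i ^ 2)) =
        ∏ i, ProbabilityTheory.gaussianPDFReal 0
          (Real.toNNReal (ψ i * τ ^ 2 * phiFull m u i ^ 2)) (θ i) := by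
      refine Finset.prod_congr rfl fun i _ => ?_
      have := hφ i
      have := h.1 i
      rw [ProbabilityTheory.gaussianPDFReal, Real.coe_toNNReal _ (by positivity), neg_div,
        rpow_neg (by positivity), ← sqrt_eq_rpow, sub_zero]
      simp only [mul_assoc]
    unfold post hyper
    dsimp only
    rw [if_pos h, if_pos h.2.1, if_pos h.2.2, e3]
    generalize (∏ i, ProbabilityTheory.gaussianPDFReal 0
          (Real.toNNReal (ψ i * τ ^ 2 * phiFull m u i ^ 2)) (θ i)) = g at *
    have h4 : 0 ≤ ∏ i, phiFull m u i ^ (a - 1) :=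
      Finset.prod_nonneg fun i _ => (rpow_pos_of_pos (hφ i) _).le
    have h5 : 0 ≤ ∏ i, (1 / 2 : ℝ) * Real.exp (-ψ i / 2) :=
      Finset.prod_nonneg fun i _ => by positivity
    calc _ ≤ 1 * 1 * g * (∏ i, if 0 < ψ i then Real.exp (-ψ i / 2) else 0) * _ * _ := by
          gcongr
      _ = _ := by ring
  · have : post m a y (θ, ψ, τ, u) = 0 := by unfold post; dsimp only; rw [if_neg h]; simp
    rw [this]
    refine mul_nonneg (mul_nonneg (by positivity) ?_) hg
    unfold hyper
    dsimp only
    refine mul_nonneg (Finset.prod_nonneg fun i _ => by split_ifs <;> positivity)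
      (mul_nonneg (by split_ifs <;> positivity) ?_)
    split_ifs with hu
    · exact Finset.prod_nonneg fun i _ => (rpow_pos_of_pos (phiFull_pos hu i) _).le
    · exact le_rfl

lemma lintegral_prod_gaussian_le {ι : Type*} [Fintype ι] (v : ι → NNReal) :
    ∫⁻ θ : ι → ℝ, ENNReal.ofReal (∏ i, ProbabilityTheory.gaussianPDFReal 0 (v i) (θ i)) ≤ 1 := by
  have hint : Integrable fun θ : ι → ℝ => ∏ i, ProbabilityTheory.gaussianPDFReal 0 (v i) (θ i) :=
    Integrable.fintype_prod (f := fun i x => ProbabilityTheory.gaussianPDFReal 0 (v i) x)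
      fun i => ProbabilityTheory.integrable_gaussianPDFReal 0 (v i)
  rw [← ofReal_integral_eq_lintegral_ofReal hint
    (Filter.Eventually.of_forall fun θ => Finset.prod_nonneg fun i _ =>
      ProbabilityTheory.gaussianPDFReal_nonneg _ _ _),
    integral_fintype_prod_volume_eq_prod
      (f := fun i x => ProbabilityTheory.gaussianPDFReal 0 (v i) x), ENNReal.ofReal_le_one]
  refine Finset.prod_le_one (fun i _ => integral_nonneg fun x =>
    ProbabilityTheory.gaussianPDFReal_nonneg _ _ _) fun i _ => ?_
  by_cases hv : v i = 0
  · simp [hv, ProbabilityTheory.gaussianPDFReal_zero_var]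
  · rw [ProbabilityTheory.integral_gaussianPDFReal_eq_one 0 hv]

lemma integrable_post {m : ℕ} {a : ℝ} (ha : 0 < a) (y : Fin (m + 1) → ℝ) :
    Integrable (post m a y) := by
  refine ⟨(measurable_post m a y).aestronglyMeasurable, ?_⟩
  rw [hasFiniteIntegral_iff_ofReal (Filter.Eventually.of_forall (post_nonneg ha y)),
    Measure.volume_eq_prod, lintegral_prod_symm _ (measurable_post m a y).ennreal_ofReal.aemeasurable]
  obtain ⟨C, hC, hle⟩ := post_le ha y
  refine lt_of_le_of_lt (lintegral_mono (g := fun w => ENNReal.ofReal (C * hyper m a w))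
    fun w => ?_) ((integrable_hyper m ha).const_mul C).lintegral_lt_top
  calc ∫⁻ θ, ENNReal.ofReal (post m a y (θ, w))
      ≤ ∫⁻ θ : Fin (m + 1) → ℝ, ENNReal.ofReal (C * hyper m a w) * ENNReal.ofReal
          (∏ i, ProbabilityTheory.gaussianPDFReal 0
            (Real.toNNReal (w.1 i * w.2.1 ^ 2 * phiFull m w.2.2 i ^ 2)) (θ i)) := by
        refine lintegral_mono fun θ => ?_
        rw [← ENNReal.ofReal_mul' (Finset.prod_nonneg fun i _ =>
          ProbabilityTheory.gaussianPDFReal_nonneg _ _ _)]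
        exact ENNReal.ofReal_le_ofReal (hle θ w)
    _ ≤ ENNReal.ofReal (C * hyper m a w) := by
        rw [lintegral_const_mul' _ _ ENNReal.ofReal_ne_top]
        exact mul_le_of_le_one_right' (lintegral_prod_gaussian_le _)

lemma isOpen_inSimplex (m : ℕ) : IsOpen {u : Fin m → ℝ | inSimplex m u} := by
  have h1 : IsOpen {u : Fin m → ℝ | ∀ i, 0 < u i} := by
    simp only [Set.ofPred_forall]
    exact isOpen_iInter_of_finite fun i => isOpen_lt continuous_const (continuous_apply i)
  exact h1.inter (isOpen_lt (f := fun u : Fin m → ℝ => ∑ i, u i) (by fun_prop) continuous_const)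

lemma inSimplex_const (m : ℕ) : inSimplex m fun _ => 1 / ((m : ℝ) + 2) := by
  refine ⟨fun i => by positivity, ?_⟩
  simp only [Finset.sum_const, Finset.card_univ, Fintype.card_fin, nsmul_eq_mul]
  rw [mul_one_div, div_lt_one (by positivity)]
  linarith

lemma isOpenPosMeasure_pi (k : ℕ) : (volume : Measure (Fin k → ℝ)).IsOpenPosMeasure := by
  rw [volume_pi]
  infer_instance

open Topology in
lemma exists_of_ae_of_nhds {X : Type*} [TopologicalSpace X] [MeasurableSpace X] {μ : Measure X}
    [μ.IsOpenPosMeasure] {P Q : X → Prop} (hP : ∀ᵐ x ∂μ, P x) {x₀ : X} (hQ : ∀ᶠ x in 𝓝 x₀, Q x) :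
    ∃ x, P x ∧ Q x := by
  obtain ⟨x, hx, hx'⟩ := (Measure.dense_of_ae hP).inter_nhds_nonempty hQ
  exact ⟨x, hx, hx'⟩

lemma Z_pos {m : ℕ} {a : ℝ} (ha : 0 < a) (y : Fin (m + 1) → ℝ) : 0 < Z m a y := by
  refine lt_of_le_of_ne (integral_nonneg (post_nonneg ha y)) fun h0 => ?_
  have h := (integral_eq_zero_iff_of_nonneg (post_nonneg ha y) (integrable_post ha y)).1 h0.symm
  have hI := isOpenPosMeasure_pi m
  have hI' := isOpenPosMeasure_pi (m + 1)
  have hψ : ∀ᶠ ψ : Fin (m + 1) → ℝ in nhds fun _ => 1, ∀ i, 0 < ψ i :=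
    Filter.eventually_all.2 fun i =>
      (continuous_apply i).continuousAt.eventually (lt_mem_nhds one_pos)
  obtain ⟨θ, h, -⟩ := exists_of_ae_of_nhds (Measure.ae_ae_of_ae_prod h) (x₀ := 0)
    (Q := fun _ => True) (by simp)
  obtain ⟨ψ, h, hψ⟩ := exists_of_ae_of_nhds (Measure.ae_ae_of_ae_prod h) hψ
  obtain ⟨τ, h, hτ⟩ := exists_of_ae_of_nhds (Measure.ae_ae_of_ae_prod h)
    (lt_mem_nhds (one_pos : (0 : ℝ) < 1))
  obtain ⟨u, h, hu⟩ := exists_of_ae_of_nhds h ((isOpen_inSimplex m).mem_nhds (inSimplex_const m))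
  exact (post_pos ha y θ hψ hτ hu).ne' h

/-! ### The posterior density does not factor -/

/-- The mixed second difference, in `ψ` and `(τ, φ)`, of twice the exponent
`∑ θ_i² / (2 ψ_i τ² φ_i²)` of the posterior density. For fixed `θ` it vanishes identically
exactly when that exponent splits as a function of `ψ` plus a function of `(τ, φ)`. -/
noncomputable def cross (m : ℕ) (θ ψ₁ ψ₂ : Fin (m + 1) → ℝ) (τ₁ τ₂ : ℝ) (u₁ u₂ : Fin m → ℝ) : ℝ :=
  ∑ i, θ i ^ 2 * (1 / ψ₁ i - 1 / ψ₂ i) *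
    (1 / (τ₁ * phiFull m u₁ i) ^ 2 - 1 / (τ₂ * phiFull m u₂ i) ^ 2)

/-- All factors of the posterior density other than the Gaussian exponential split. -/
lemma post_split {m : ℕ} {a : ℝ} (y : Fin (m + 1) → ℝ) :
    ∃ (A B : (Fin (m + 1) → ℝ) → ℝ) (C : ℝ → (Fin m → ℝ) → ℝ), ∀ θ ψ τ u,
      (∀ i, 0 < ψ i) → 0 < τ → inSimplex m u →
      post m a y (θ, ψ, τ, u) = A θ * B ψ * C τ u *
        Real.exp (-∑ i, θ i ^ 2 / (2 * ψ i * τ ^ 2 * phiFull m u i ^ 2)) := by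
  refine ⟨fun θ => ∏ i, (2 * π) ^ (-(1 : ℝ) / 2) * Real.exp (-(y i - θ i) ^ 2 / 2),
    fun ψ => (∏ i, ψ i ^ (-(1 : ℝ) / 2)) * ∏ i, (1 / 2 : ℝ) * Real.exp (-ψ i / 2),
    fun τ u => (∏ i, (2 * π * τ ^ 2 * phiFull m u i ^ 2) ^ (-(1 : ℝ) / 2)) *
      ((((1 / 2 : ℝ) ^ (((m : ℝ) + 1) * a) / Real.Gamma (((m : ℝ) + 1) * a)) *
      τ ^ (((m : ℝ) + 1) * a - 1) * Real.exp (-τ / 2)) *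
    ((Real.Gamma (((m : ℝ) + 1) * a) / ∏ _i : Fin (m + 1), Real.Gamma a) *
      ∏ i, phiFull m u i ^ (a - 1))), ?_⟩
  intro θ ψ τ u hψ hτ hu
  have e : ∏ i, (2 * π * ψ i * τ ^ 2 * phiFull m u i ^ 2) ^ (-(1 : ℝ) / 2) *
      Real.exp (-(θ i) ^ 2 / (2 * ψ i * τ ^ 2 * phiFull m u i ^ 2)) =
      (∏ i, ψ i ^ (-(1 : ℝ) / 2)) * (∏ i, (2 * π * τ ^ 2 * phiFull m u i ^ 2) ^ (-(1 : ℝ) / 2)) *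
        Real.exp (-∑ i, θ i ^ 2 / (2 * ψ i * τ ^ 2 * phiFull m u i ^ 2)) := by
    rw [← Finset.sum_neg_distrib, Real.exp_sum, ← Finset.prod_mul_distrib,
      ← Finset.prod_mul_distrib]
    refine Finset.prod_congr rfl fun i _ => ?_
    rw [← mul_rpow (hψ i).le (by positivity), neg_div _ (θ i ^ 2)]
    congr 2
    ring
  unfold post
  dsimp only
  rw [if_pos ⟨hψ, hτ, hu⟩, e]
  ring

lemma cross_eq_zero {m : ℕ} {a : ℝ} (ha : 0 < a) (y : Fin (m + 1) → ℝ)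
    {θ ψ₁ ψ₂ : Fin (m + 1) → ℝ} {τ₁ τ₂ : ℝ} {u₁ u₂ : Fin m → ℝ}
    (hψ₁ : ∀ i, 0 < ψ₁ i) (hψ₂ : ∀ i, 0 < ψ₂ i) (hτ₁ : 0 < τ₁) (hτ₂ : 0 < τ₂)
    (hu₁ : inSimplex m u₁) (hu₂ : inSimplex m u₂)
    (h : p m a y (θ, ψ₁, τ₁, u₁) * p m a y (θ, ψ₂, τ₂, u₂) =
      p m a y (θ, ψ₁, τ₂, u₂) * p m a y (θ, ψ₂, τ₁, u₁)) :
    cross m θ ψ₁ ψ₂ τ₁ τ₂ u₁ u₂ = 0 := by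
  have hZ := (Z_pos ha y).ne'
  have p11 := (post_pos ha y θ hψ₁ hτ₁ hu₁).ne'
  have p22 := (post_pos ha y θ hψ₂ hτ₂ hu₂).ne'
  obtain ⟨A, B, C, hp⟩ := post_split (a := a) y
  unfold p at h
  rw [div_mul_div_comm, div_mul_div_comm, div_left_inj' (mul_ne_zero hZ hZ)] at h
  rw [hp _ _ _ _ hψ₁ hτ₁ hu₁] at p11 h
  rw [hp _ _ _ _ hψ₂ hτ₂ hu₂] at p22 h
  rw [hp _ _ _ _ hψ₁ hτ₂ hu₂, hp _ _ _ _ hψ₂ hτ₁ hu₁] at h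
  have c1 := left_ne_zero_of_mul p11
  have c2 := left_ne_zero_of_mul p22
  have h' : Real.exp (-∑ i, θ i ^ 2 / (2 * ψ₁ i * τ₁ ^ 2 * phiFull m u₁ i ^ 2)) *
      Real.exp (-∑ i, θ i ^ 2 / (2 * ψ₂ i * τ₂ ^ 2 * phiFull m u₂ i ^ 2)) =
      Real.exp (-∑ i, θ i ^ 2 / (2 * ψ₁ i * τ₂ ^ 2 * phiFull m u₂ i ^ 2)) *
      Real.exp (-∑ i, θ i ^ 2 / (2 * ψ₂ i * τ₁ ^ 2 * phiFull m u₁ i ^ 2)) := by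
    apply mul_left_cancel₀ (mul_ne_zero c1 c2)
    linear_combination h
  rw [← Real.exp_add, ← Real.exp_add, Real.exp_eq_exp] at h'
  have e : cross m θ ψ₁ ψ₂ τ₁ τ₂ u₁ u₂ =
      2 * (∑ i, θ i ^ 2 / (2 * ψ₁ i * τ₁ ^ 2 * phiFull m u₁ i ^ 2) +
        ∑ i, θ i ^ 2 / (2 * ψ₂ i * τ₂ ^ 2 * phiFull m u₂ i ^ 2) -
        ∑ i, θ i ^ 2 / (2 * ψ₁ i * τ₂ ^ 2 * phiFull m u₂ i ^ 2) -
        ∑ i, θ i ^ 2 / (2 * ψ₂ i * τ₁ ^ 2 * phiFull m u₁ i ^ 2)) := by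
    rw [← Finset.sum_add_distrib, ← Finset.sum_sub_distrib, ← Finset.sum_sub_distrib,
      Finset.mul_sum]
    refine Finset.sum_congr rfl fun i _ => ?_
    have := (hψ₁ i).ne'
    have := (hψ₂ i).ne'
    have := (phiFull_pos hu₁ i).ne'
    have := (phiFull_pos hu₂ i).ne'
    field_simp
    ring
  rw [e]
  linarith

lemma continuous_phiFull (m : ℕ) (i : Fin (m + 1)) :
    Continuous fun u : Fin m → ℝ => phiFull m u i := by
  refine Fin.lastCases ?_ (fun j => ?_) i
  · simp only [phiFull, Fin.snoc_last]; fun_prop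
  · simp only [phiFull, Fin.snoc_castSucc]; fun_prop

/-- The condition on `(θ, ψ₁, ψ₂, τ₁, τ₂, u₁, u₂)` that excludes a factorization of the
posterior density over the corresponding four states. -/
def Good (m : ℕ) (θ ψ₁ ψ₂ : Fin (m + 1) → ℝ) (τ₁ τ₂ : ℝ) (u₁ u₂ : Fin m → ℝ) : Prop :=
  ((∀ i, 0 < ψ₁ i) ∧ (∀ i, 0 < ψ₂ i) ∧ 0 < τ₁ ∧ 0 < τ₂ ∧ inSimplex m u₁ ∧ inSimplex m u₂) ∧
    cross m θ ψ₁ ψ₂ τ₁ τ₂ u₁ u₂ ≠ 0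

open Topology in
/-- `Good` is an open condition. -/
lemma eventually_good {X : Type*} [TopologicalSpace X] {m : ℕ}
    {θ ψ₁ ψ₂ : X → Fin (m + 1) → ℝ} {τ₁ τ₂ : X → ℝ} {u₁ u₂ : X → Fin m → ℝ}
    (hθ : Continuous θ) (hψ₁ : Continuous ψ₁) (hψ₂ : Continuous ψ₂) (hτ₁ : Continuous τ₁)
    (hτ₂ : Continuous τ₂) (hu₁ : Continuous u₁) (hu₂ : Continuous u₂) {x : X}
    (hx : Good m (θ x) (ψ₁ x) (ψ₂ x) (τ₁ x) (τ₂ x) (u₁ x) (u₂ x)) :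
    ∀ᶠ z in 𝓝 x, Good m (θ z) (ψ₁ z) (ψ₂ z) (τ₁ z) (τ₂ z) (u₁ z) (u₂ z) := by
  obtain ⟨⟨h1, h2, h3, h4, h5, h6⟩, h7⟩ := hx
  have hpos : ∀ ψ : X → Fin (m + 1) → ℝ, Continuous ψ → (∀ i, 0 < ψ x i) →
      ∀ᶠ z in 𝓝 x, ∀ i, 0 < ψ z i := fun ψ hψ h => Filter.eventually_all.2 fun i =>
    ((continuous_apply i).comp hψ).continuousAt.eventually (lt_mem_nhds (h i))
  refine Filter.Eventually.and ?_ ?_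
  · refine (hpos _ hψ₁ h1).and ((hpos _ hψ₂ h2).and ?_)
    refine (hτ₁.continuousAt.eventually (lt_mem_nhds h3)).and
      ((hτ₂.continuousAt.eventually (lt_mem_nhds h4)).and ?_)
    exact (hu₁.continuousAt.eventually ((isOpen_inSimplex m).mem_nhds h5)).and
      (hu₂.continuousAt.eventually ((isOpen_inSimplex m).mem_nhds h6))
  · refine ContinuousAt.eventually_ne ?_ h7
    unfold cross
    refine tendsto_finsetSum _ fun i _ => ?_
    have c := fun ψ : X → Fin (m + 1) → ℝ => fun hψ : Continuous ψ =>
      ((continuous_apply i).comp hψ).continuousAt (x := x)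
    have d := fun u : X → Fin m → ℝ => fun hu : Continuous u =>
      ((continuous_phiFull m i).comp hu).continuousAt (x := x)
    refine (((c θ hθ).pow 2).mul ((continuousAt_const.div (c ψ₁ hψ₁) (h1 i).ne').sub
      (continuousAt_const.div (c ψ₂ hψ₂) (h2 i).ne'))).mul
      ((continuousAt_const.div ((hτ₁.continuousAt.mul (d u₁ hu₁)).pow 2) ?_).sub
        (continuousAt_const.div ((hτ₂.continuousAt.mul (d u₂ hu₂)).pow 2) ?_))
    · exact (pow_pos (mul_pos h3 (phiFull_pos h5 i)) 2).ne'
    · exact (pow_pos (mul_pos h4 (phiFull_pos h6 i)) 2).ne'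

/-! ### One step of the sampler -/

/-- One step of the wrong-order sampler produces a state whose `φ`-component is independent of
`(ψ, τ)` given `θ`. -/
lemma step_factor (m : ℕ) (a : ℝ) (y : Fin (m + 1) → ℝ) :
    ∃ (F : (Fin (m + 1) → ℝ) → (Fin (m + 1) → ℝ) → ℝ → ℝ)
      (G : (Fin (m + 1) → ℝ) → (Fin m → ℝ) → ℝ), ∀ θ ψ τ u,
      ∫ x₀ : E m, K m a y x₀ (θ, ψ, τ, u) * p m a y x₀ = F θ ψ τ * G θ u := by
  refine ⟨fun θ ψ τ => ∫ x₀ : E m,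
    (p m a y (θ, x₀.2.1, x₀.2.2.1, x₀.2.2.2) / pψτφ m a y x₀.2.1 x₀.2.2.1 x₀.2.2.2) *
    (p m a y (θ, ψ, x₀.2.2.1, x₀.2.2.2) / pθτφ m a y θ x₀.2.2.1 x₀.2.2.2) *
    (pθτφ m a y θ τ x₀.2.2.2 / pθφ m a y θ x₀.2.2.2) * p m a y x₀,
    fun θ u => pθφ m a y θ u / pθ m a y θ, fun θ ψ τ u => ?_⟩
  rw [← integral_mul_const]
  congr 1
  funext x₀
  unfold K
  ring

/-- In dimension `n = 1`, where `φ` is constant, one step of the wrong-order sampler produces a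
state whose `τ`-component is independent of `ψ` given `θ`. -/
lemma step_factor_zero (a : ℝ) (y : Fin (0 + 1) → ℝ) :
    ∃ (F : (Fin (0 + 1) → ℝ) → (Fin (0 + 1) → ℝ) → ℝ)
      (G : (Fin (0 + 1) → ℝ) → ℝ → ℝ), ∀ θ ψ τ u,
      ∫ x₀ : E 0, K 0 a y x₀ (θ, ψ, τ, u) * p 0 a y x₀ = F θ ψ * G θ τ := by
  refine ⟨fun θ ψ => ∫ x₀ : E 0,
    (p 0 a y (θ, x₀.2.1, x₀.2.2.1, x₀.2.2.2) / pψτφ 0 a y x₀.2.1 x₀.2.2.1 x₀.2.2.2) *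
    (p 0 a y (θ, ψ, x₀.2.2.1, x₀.2.2.2) / pθτφ 0 a y θ x₀.2.2.1 x₀.2.2.2) *
    p 0 a y x₀,
    fun θ τ => pθτφ 0 a y θ τ 0 / pθφ 0 a y θ 0 * (pθφ 0 a y θ 0 / pθ 0 a y θ),
    fun θ ψ τ u => ?_⟩
  rw [← integral_mul_const]
  congr 1
  funext x₀
  unfold K
  dsimp only
  rw [Subsingleton.elim x₀.2.2.2 0, Subsingleton.elim u 0]
  ring

/-! ### Non-factorization almost everywhere -/

/-- In dimension `n ≥ 2` the posterior density does not factor a.e. as a function of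
`(θ, ψ, τ)` times a function of `(θ, φ)`. -/
lemma not_ae_factor {m : ℕ} (hm : m ≠ 0) {a : ℝ} (ha : 0 < a) (y : Fin (m + 1) → ℝ)
    (F : (Fin (m + 1) → ℝ) → (Fin (m + 1) → ℝ) → ℝ → ℝ)
    (G : (Fin (m + 1) → ℝ) → (Fin m → ℝ) → ℝ) :
    ¬ ∀ᵐ x : E m, F x.1 x.2.1 x.2.2.1 * G x.1 x.2.2.2 = p m a y x := by
  intro h
  have hI := isOpenPosMeasure_pi m
  have hI' := isOpenPosMeasure_pi (m + 1)
  -- Only `ψ 0` and `φ` vary, so a single term of `cross` survives at this base point.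
  have hgood : Good m (fun _ => 1) (fun _ => 1) (fun i => if i = 0 then 2 else 1) 1 1
      (fun _ => 1 / ((m : ℝ) + 2)) (fun _ => 1 / ((m : ℝ) + 3)) := by
    refine ⟨⟨fun _ => one_pos, fun i => by dsimp only; split_ifs <;> norm_num, one_pos, one_pos,
      inSimplex_const m, fun i => by positivity, ?_⟩, ?_⟩
    · simp only [Finset.sum_const, Finset.card_univ, Fintype.card_fin, nsmul_eq_mul]
      rw [mul_one_div, div_lt_one (by positivity)]
      linarith
    · obtain ⟨k, rfl⟩ := Nat.exists_eq_succ_of_ne_zero hm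
      unfold cross
      rw [Finset.sum_eq_single 0]
      · have hz : ∀ u : Fin (k + 1) → ℝ, phiFull (k + 1) u 0 = u 0 := fun u => by
          exact Fin.snoc_castSucc (α := fun _ => ℝ) (1 - ∑ i, u i) u 0
        simp only [Nat.succ_eq_add_one, hz]
        have : (0 : ℝ) ≤ k := Nat.cast_nonneg k
        push_cast
        simp only [one_div, one_mul, one_pow, inv_pow, inv_inv]
        intro h0
        nlinarith
      · intro i _ hi
        simp [hi]
      · simp
  have hev := eventually_good (X := (Fin (m + 1) → ℝ) × (Fin (m + 1) → ℝ) × (Fin (m + 1) → ℝ) ×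
      ℝ × (Fin m → ℝ) × (Fin m → ℝ)) (θ := fun z => z.1) (ψ₁ := fun z => z.2.1)
    (ψ₂ := fun z => z.2.2.1) (τ₁ := fun z => z.2.2.2.1) (τ₂ := fun z => z.2.2.2.1)
    (u₁ := fun z => z.2.2.2.2.1) (u₂ := fun z => z.2.2.2.2.2)
    (by fun_prop) (by fun_prop) (by fun_prop) (by fun_prop) (by fun_prop) (by fun_prop)
    (by fun_prop) (x := (_, _, _, _, _, _)) hgood
  obtain ⟨θ, hθ, hev⟩ := exists_of_ae_of_nhds (Measure.ae_ae_of_ae_prod h) hev.curry_nhds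
  have hψ := Measure.ae_ae_of_ae_prod hθ
  obtain ⟨ψ₁, hψ₁, hev⟩ := exists_of_ae_of_nhds hψ hev.curry_nhds
  obtain ⟨ψ₂, hψ₂, hev⟩ := exists_of_ae_of_nhds hψ hev.curry_nhds
  obtain ⟨τ, ⟨hτ₁, hτ₂⟩, hev⟩ := exists_of_ae_of_nhds
    ((Measure.ae_ae_of_ae_prod hψ₁).and (Measure.ae_ae_of_ae_prod hψ₂)) hev.curry_nhds
  obtain ⟨u₁, ⟨h11, h21⟩, hev⟩ := exists_of_ae_of_nhds (hτ₁.and hτ₂) hev.curry_nhds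
  obtain ⟨u₂, ⟨h12, h22⟩, ⟨g1, g2, g3, g4, g5, g6⟩, hne⟩ :=
    exists_of_ae_of_nhds (hτ₁.and hτ₂) hev
  refine hne (cross_eq_zero ha y g1 g2 g3 g4 g5 g6 ?_)
  dsimp only at h11 h12 h21 h22 ⊢
  rw [← h11, ← h12, ← h21, ← h22]
  ring

/-- In dimension `n = 1` the posterior density does not factor a.e. as a function of `(θ, ψ)`
times a function of `(θ, τ)`. -/
lemma not_ae_factor_zero {a : ℝ} (ha : 0 < a) (y : Fin (0 + 1) → ℝ)
    (F : (Fin (0 + 1) → ℝ) → (Fin (0 + 1) → ℝ) → ℝ) (G : (Fin (0 + 1) → ℝ) → ℝ → ℝ) :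
    ¬ ∀ᵐ x : E 0, F x.1 x.2.1 * G x.1 x.2.2.1 = p 0 a y x := by
  intro h
  have hI := isOpenPosMeasure_pi 0
  have hI' := isOpenPosMeasure_pi (0 + 1)
  have hu : ∀ u : Fin 0 → ℝ, inSimplex 0 u := fun u => ⟨fun i => i.elim0, by simp⟩
  have hgood : Good 0 (fun _ => 1) (fun _ => 1) (fun _ => 2) 1 2 0 0 := by
    refine ⟨⟨fun _ => one_pos, fun _ => two_pos, one_pos, two_pos, hu _, hu _⟩, ?_⟩
    have h1 : ∀ u i, phiFull 0 u i = 1 := fun u i => by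
      simp [phiFull, Fin.snoc]
    simp only [cross, h1, Fin.sum_univ_succ]
    norm_num
  have hev := eventually_good (X := (Fin (0 + 1) → ℝ) × (Fin (0 + 1) → ℝ) × (Fin (0 + 1) → ℝ) ×
      ℝ × ℝ) (θ := fun z => z.1) (ψ₁ := fun z => z.2.1)
    (ψ₂ := fun z => z.2.2.1) (τ₁ := fun z => z.2.2.2.1) (τ₂ := fun z => z.2.2.2.2)
    (u₁ := fun z => 0) (u₂ := fun z => 0)
    (by fun_prop) (by fun_prop) (by fun_prop) (by fun_prop) (by fun_prop) (by fun_prop)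
    (by fun_prop) (x := (_, _, _, _, _)) hgood
  obtain ⟨θ, hθ, hev⟩ := exists_of_ae_of_nhds (Measure.ae_ae_of_ae_prod h) hev.curry_nhds
  have hψ := Measure.ae_ae_of_ae_prod hθ
  obtain ⟨ψ₁, hψ₁, hev⟩ := exists_of_ae_of_nhds hψ hev.curry_nhds
  obtain ⟨ψ₂, hψ₂, hev⟩ := exists_of_ae_of_nhds hψ hev.curry_nhds
  have hτ := (Measure.ae_ae_of_ae_prod hψ₁).and (Measure.ae_ae_of_ae_prod hψ₂)
  obtain ⟨τ₁, ⟨hτ11, hτ21⟩, hev⟩ := exists_of_ae_of_nhds hτ hev.curry_nhds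
  obtain ⟨τ₂, ⟨hτ12, hτ22⟩, ⟨g1, g2, g3, g4, g5, g6⟩, hne⟩ := exists_of_ae_of_nhds hτ hev
  -- The space of free coordinates of `φ` is a single point, so a property holding for a.e. `u` holds at `0`.
  have pt : ∀ {P : (Fin 0 → ℝ) → Prop}, (∀ᵐ u, P u) → P 0 := by
    intro P hP
    obtain ⟨u, hu, -⟩ := exists_of_ae_of_nhds hP (x₀ := 0) (Q := fun _ => True) (by simp)
    rwa [Subsingleton.elim u 0] at hu
  refine hne (cross_eq_zero ha y g1 g2 g3 g4 g5 g6 ?_)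
  have h11 := pt hτ11
  have h12 := pt hτ12
  have h21 := pt hτ21
  have h22 := pt hτ22
  dsimp only at h11 h12 h21 h22 ⊢
  rw [← h11, ← h12, ← h21, ← h22]
  ring

lemma not_ae_invariant (m : ℕ) (a : ℝ) (ha : 0 < a) (y : Fin (m + 1) → ℝ) :
    ¬ ∀ᵐ x' : E m, (∫ x₀ : E m, K m a y x₀ x' * p m a y x₀) = p m a y x' := by
  intro h
  rcases eq_or_ne m 0 with rfl | hm
  · obtain ⟨F, G, hFG⟩ := step_factor_zero a y
    refine not_ae_factor_zero ha y F G (h.mono fun x hx => ?_)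
    rw [← hx, ← hFG x.1 x.2.1 x.2.2.1 x.2.2.2]
  · obtain ⟨F, G, hFG⟩ := step_factor m a y
    refine not_ae_factor hm ha y F G (h.mono fun x hx => ?_)
    rw [← hx, ← hFG x.1 x.2.1 x.2.2.1 x.2.2.2]

/-- Proposition 1: the posterior is not invariant under the wrong-order Gibbs kernel `K`:
the function `x′ ↦ ∫ K(x₀ ; x′) p(x₀ ∣ y) dx₀` differs from `p(x′ ∣ y)` on a set of positive
Lebesgue measure; consequently, any stationary density `q` of this kernel satisfies
`q ≠ p(· ∣ y)` (they are not a.e. equal). -/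
theorem wrong_order_gibbs_not_invariant (m : ℕ) (a : ℝ) (ha : 0 < a)
    (y : Fin (m + 1) → ℝ) :
    volume {x' : E m | (∫ x₀ : E m, K m a y x₀ x' * p m a y x₀) ≠ p m a y x'} ≠ 0 ∧
      ∀ q : E m → ℝ, Measurable q → (∀ x, 0 ≤ q x) → (∫ x : E m, q x) = 1 →
        (∀ᵐ x' ∂(volume : Measure (E m)), (∫ x₀ : E m, K m a y x₀ x' * q x₀) = q x') →
        ¬ q =ᵐ[(volume : Measure (E m))] p m a y := by
  refine ⟨fun h0 => not_ae_invariant m a ha y (ae_iff.2 h0), ?_⟩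
  intro q _ _ _ hstat hq
  refine not_ae_invariant m a ha y ?_
  filter_upwards [hstat, hq] with x' h1 h2
  rw [← h2, ← h1]
  refine integral_congr_ae ?_
  filter_upwards [hq] with x₀ h
  rw [h]

end DLNormalMeans
end

section
/- Let p be a measurable probability density on the product space Θ × Ψ × T × Φ, where Θ = ℝⁿ, Ψ = (0,∞)ⁿ, T = (0,∞), Φ = ℝᵐ, each equipped with Lebesgue measure, and assume all marginal densities of p (obtained by integrating out any subset of the four blocks) are strictly positive. Define conditional densities as ratios, e.g. p(ψ, τ | θ, φ) = p(θ,ψ,τ,φ)/p(θ,φ). Define the kernel density K(θ₀,ψ₀,τ₀,φ₀ ; θ′,ψ′,τ′,φ′) = p(θ′ | ψ₀,τ₀,φ₀) · p(ψ′ | θ′, τ₀, φ₀) · p(τ′ | θ′, φ₀) · p(φ′ | θ′). If the invariance identity p(θ′,ψ′,τ′,φ′) = ∫ K(θ₀,ψ₀,τ₀,φ₀ ; θ′,ψ′,τ′,φ′) p(θ₀,ψ₀,τ₀,φ₀) dθ₀ dψ₀ dτ₀ dφ₀ holds for almost every (θ′,ψ′,τ′,φ′), then p(θ′) p(ψ′,τ′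 | θ′,φ′) = ∫ p(τ′ | θ′, φ₀) p(θ′, ψ′, φ₀) dφ₀ for almost every (θ′,ψ′,τ′,φ′); in particular, for almost every (θ′,ψ′,τ′) the function φ′ ↦ p(ψ′,τ′ | θ′,φ′) is almost everywhere equal to a constant not depending on φ′. -/
/-!
For almost every target point `x'` the density `p x'` is positive, so the invariance identity
says that the integral of `K(·, x') p` is nonzero; a Bochner integral of a non-integrable function
is `0`, hence `K(·, x') p` is integrable and Fubini applies. Integrating out `θ₀`, `ψ₀`, `τ₀` in
this order, the first two integrations cancel the denominators `p(ψ₀,τ₀,φ₀)` and `p(θ',τ₀,φ₀)`,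
while the third turns `p(θ',ψ',τ₀,φ₀)` into `p(θ',ψ',φ₀)`. What remains is the claimed integral
over `φ₀` times `p(θ',φ') / p(θ')`. Its value does not depend on `φ'`, which gives the constancy
after reassociating the product measure.
-/

open MeasureTheory Real

/-- Fubini with the first variable integrated out, where the inner integral only has to be known
almost everywhere; integrability passes to the resulting function. -/
lemma integrable_and_integral_eq_of_inner {α β : Type*} [MeasurableSpace α] [MeasurableSpace β]
    {μ : Measure α} {ν : Measure β} [SFinite μ] [SFinite ν] {f : α × β → ℝ} {g : β → ℝ}
    (hf : Integrable f (μ.prod ν)) (hg : ∀ᵐ y ∂ν, ∫ x, f (x, y) ∂μ = g y) :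
    Integrable g ν ∧ ∫ z, f z ∂(μ.prod ν) = ∫ y, g y ∂ν :=
  ⟨hf.integral_prod_right.congr hg, by rw [integral_prod_symm f hf, integral_congr_ae hg]⟩

/-- Core lemma in the proof of Proposition 1. Let `p` be a measurable probability density on
`Θ × Ψ × T × Φ` with `Θ = ℝⁿ`, `Ψ = (0,∞)ⁿ`, `T = (0,∞)`, `Φ = ℝᵐ`, each carrying Lebesgue
measure (the restrictions to `(0,∞)ⁿ` and `(0,∞)` being encoded by restricted Lebesgue
measures `μΨ` and `μT`), with strictly positive marginal densities. Define conditional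
densities as ratios of marginals, and the wrong-order Gibbs kernel
`K(θ₀,ψ₀,τ₀,φ₀ ; θ′,ψ′,τ′,φ′) = p(θ′∣ψ₀,τ₀,φ₀) p(ψ′∣θ′,τ₀,φ₀) p(τ′∣θ′,φ₀) p(φ′∣θ′)`.
If `p` is invariant under `K`, then a.e.
`p(θ′) p(ψ′,τ′∣θ′,φ′) = ∫ p(τ′∣θ′,φ₀) p(θ′,ψ′,φ₀) dφ₀`; in particular, for a.e.
`(θ′,ψ′,τ′)` the function `φ′ ↦ p(ψ′,τ′∣θ′,φ′)` is a.e. equal to a constant not depending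
on `φ′`. -/
theorem wrong_order_invariance_forces_constant_conditional (n m : ℕ)
    (μΨ : Measure (Fin n → ℝ)) (hμΨ : μΨ = volume.restrict {ψ | ∀ i, 0 < ψ i})
    (μT : Measure ℝ) (hμT : μT = volume.restrict (Set.Ioi 0))
    (μ : Measure ((Fin n → ℝ) × (Fin n → ℝ) × ℝ × (Fin m → ℝ)))
    (hμ : μ = (volume : Measure (Fin n → ℝ)).prod
      (μΨ.prod (μT.prod (volume : Measure (Fin m → ℝ)))))
    (p : (Fin n → ℝ) × (Fin n → ℝ) × ℝ × (Fin m → ℝ) → ℝ)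
    (hpmeas : Measurable p) (hpnonneg : ∀ x, 0 ≤ p x) (hpone : ∫ x, p x ∂μ = 1)
    -- strict positivity of the density and of its marginals (on the domain)
    (hppos : ∀ θ ψ τ φ, (∀ i, 0 < ψ i) → 0 < τ → 0 < p (θ, ψ, τ, φ))
    -- marginal densities, obtained by integrating out blocks
    (pθ : (Fin n → ℝ) → ℝ)
    (hpθ : ∀ θ, pθ θ = ∫ w, p (θ, w.1, w.2.1, w.2.2)
      ∂(μΨ.prod (μT.prod (volume : Measure (Fin m → ℝ)))))
    (pθφ : (Fin n → ℝ) → (Fin m → ℝ) → ℝ)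
    (hpθφ : ∀ θ φ, pθφ θ φ = ∫ w, p (θ, w.1, w.2, φ) ∂(μΨ.prod μT))
    (pθτφ : (Fin n → ℝ) → ℝ → (Fin m → ℝ) → ℝ)
    (hpθτφ : ∀ θ τ φ, pθτφ θ τ φ = ∫ ψ, p (θ, ψ, τ, φ) ∂μΨ)
    (pθψφ : (Fin n → ℝ) → (Fin n → ℝ) → (Fin m → ℝ) → ℝ)
    (hpθψφ : ∀ θ ψ φ, pθψφ θ ψ φ = ∫ τ, p (θ, ψ, τ, φ) ∂μT)
    (pψτφ : (Fin n → ℝ) → ℝ → (Fin m → ℝ) → ℝ)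
    (hpψτφ : ∀ ψ τ φ, pψτφ ψ τ φ = ∫ θ, p (θ, ψ, τ, φ))
    (hpθpos : ∀ θ, 0 < pθ θ)
    (hpθφpos : ∀ θ φ, 0 < pθφ θ φ)
    (hpθτφpos : ∀ θ τ φ, 0 < τ → 0 < pθτφ θ τ φ)
    (hpθψφpos : ∀ θ ψ φ, (∀ i, 0 < ψ i) → 0 < pθψφ θ ψ φ)
    (hpψτφpos : ∀ ψ τ φ, (∀ i, 0 < ψ i) → 0 < τ → 0 < pψτφ ψ τ φ)
    -- the wrong-order Gibbs kernel
    (K : ((Fin n → ℝ) × (Fin n → ℝ) × ℝ × (Fin m → ℝ)) →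
      ((Fin n → ℝ) × (Fin n → ℝ) × ℝ × (Fin m → ℝ)) → ℝ)
    (hK : ∀ x₀ x', K x₀ x' =
      (p (x'.1, x₀.2.1, x₀.2.2.1, x₀.2.2.2) / pψτφ x₀.2.1 x₀.2.2.1 x₀.2.2.2) *
        (p (x'.1, x'.2.1, x₀.2.2.1, x₀.2.2.2) / pθτφ x'.1 x₀.2.2.1 x₀.2.2.2) *
        (pθτφ x'.1 x'.2.2.1 x₀.2.2.2 / pθφ x'.1 x₀.2.2.2) *
        (pθφ x'.1 x'.2.2.2 / pθ x'.1))
    -- the invariance identity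
    (hinv : ∀ᵐ x' ∂μ, p x' = ∫ x₀, K x₀ x' * p x₀ ∂μ) :
    (∀ᵐ x' ∂μ, pθ x'.1 * (p x' / pθφ x'.1 x'.2.2.2) =
        ∫ φ₀, (pθτφ x'.1 x'.2.2.1 φ₀ / pθφ x'.1 φ₀) * pθψφ x'.1 x'.2.1 φ₀) ∧
      ∀ᵐ w ∂((volume : Measure (Fin n → ℝ)).prod (μΨ.prod μT)), ∃ c : ℝ,
        ∀ᵐ φ' ∂(volume : Measure (Fin m → ℝ)),
          p (w.1, w.2.1, w.2.2, φ') / pθφ w.1 φ' = c := by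
  have hΨ : ∀ᵐ ψ ∂μΨ, ∀ i, 0 < ψ i := by
    have hmeas : MeasurableSet {ψ : Fin n → ℝ | ∀ i, 0 < ψ i} := by
      have hset : {ψ : Fin n → ℝ | ∀ i, 0 < ψ i} = ⋂ i, {ψ | 0 < ψ i} := by
        ext; simp
      rw [hset]
      exact MeasurableSet.iInter fun i => measurableSet_lt measurable_const (measurable_pi_apply i)
    rw [hμΨ]
    exact ae_restrict_mem hmeas
  have hT : ∀ᵐ τ ∂μT, 0 < τ := by
    rw [hμT]
    exact ae_restrict_mem measurableSet_Ioi
  have hsΨ : SFinite μΨ := by rw [hμΨ]; infer_instance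
  have hsT : SFinite μT := by rw [hμT]; infer_instance
  have hTΦ : ∀ᵐ z ∂(μT.prod (volume : Measure (Fin m → ℝ))), 0 < z.1 :=
    Measure.quasiMeasurePreserving_fst.ae hT
  have hΨTΦ : ∀ᵐ y ∂(μΨ.prod (μT.prod (volume : Measure (Fin m → ℝ)))),
      (∀ i, 0 < y.1 i) ∧ 0 < y.2.1 :=
    (Measure.quasiMeasurePreserving_fst.ae hΨ).and (Measure.quasiMeasurePreserving_snd.ae hTΦ)
  have hdom : ∀ᵐ x ∂μ, (∀ i, 0 < x.2.1 i) ∧ 0 < x.2.2.1 := by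
    rw [hμ]
    exact Measure.quasiMeasurePreserving_snd.ae hΨTΦ
  have main : ∀ᵐ x' ∂μ, pθ x'.1 * (p x' / pθφ x'.1 x'.2.2.2) =
      ∫ φ₀, (pθτφ x'.1 x'.2.2.1 φ₀ / pθφ x'.1 φ₀) * pθψφ x'.1 x'.2.1 φ₀ := by
    filter_upwards [hinv, hdom] with x' hx' hx'dom
    obtain ⟨θ, ψ, τ, φ⟩ := x'
    simp only at hx' hx'dom ⊢
    have hpos := hppos θ ψ τ φ hx'dom.1 hx'dom.2
    -- positivity of `p x'` excludes the junk value of the integral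
    have hint : Integrable (fun x₀ => K x₀ (θ, ψ, τ, φ) * p x₀) μ := by
      by_contra hni
      rw [integral_undef hni] at hx'
      exact hpos.ne' hx'
    rw [hμ] at hint hx'
    obtain ⟨hint₁, h₁⟩ := integrable_and_integral_eq_of_inner (g := fun y =>
        p (θ, y) * ((p (θ, ψ, y.2) / pθτφ θ y.2.1 y.2.2) *
          (pθτφ θ τ y.2.2 / pθφ θ y.2.2) * (pθφ θ φ / pθ θ))) hint (by
      filter_upwards [hΨTΦ] with y hy
      have hne := (hpψτφpos y.1 y.2.1 y.2.2 hy.1 hy.2).ne'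
      simp only [hK]
      rw [integral_const_mul, ← hpψτφ]
      field_simp)
    obtain ⟨hint₂, h₂⟩ := integrable_and_integral_eq_of_inner (g := fun z =>
        p (θ, ψ, z) * ((pθτφ θ τ z.2 / pθφ θ z.2) * (pθφ θ φ / pθ θ))) hint₁ (by
      filter_upwards [hTΦ] with z hz
      have hne := (hpθτφpos θ z.1 z.2 hz).ne'
      rw [integral_mul_const, ← hpθτφ]
      field_simp)
    obtain ⟨-, h₃⟩ := integrable_and_integral_eq_of_inner (g := fun φ₀ =>
        ((pθτφ θ τ φ₀ / pθφ θ φ₀) * pθψφ θ ψ φ₀) * (pθφ θ φ / pθ θ)) hint₂ (by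
      filter_upwards with φ₀
      rw [integral_mul_const, ← hpθψφ]
      ring)
    rw [h₁, h₂, h₃, integral_mul_const] at hx'
    have hne := (hpθpos θ).ne'
    have hne' := (hpθφpos θ φ).ne'
    rw [hx']
    field_simp
  refine ⟨main, ?_⟩
  have hassoc : MeasurePreserving
      (fun v : ((Fin n → ℝ) × (Fin n → ℝ) × ℝ) × (Fin m → ℝ) =>
        (v.1.1, v.1.2.1, v.1.2.2, v.2))
      (((volume : Measure (Fin n → ℝ)).prod (μΨ.prod μT)).prod
        (volume : Measure (Fin m → ℝ))) μ := by
    rw [hμ]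
    exact ((MeasurePreserving.id (volume : Measure (Fin n → ℝ))).prod
      (measurePreserving_prodAssoc μΨ μT (volume : Measure (Fin m → ℝ)))).comp
      (measurePreserving_prodAssoc (volume : Measure (Fin n → ℝ)) (μΨ.prod μT)
        (volume : Measure (Fin m → ℝ)))
  filter_upwards [Measure.ae_ae_of_ae_prod (hassoc.quasiMeasurePreserving.ae main)] with w hw
  refine ⟨(∫ φ₀, (pθτφ w.1 w.2.2 φ₀ / pθφ w.1 φ₀) * pθψφ w.1 w.2.1 φ₀) / pθ w.1, ?_⟩
  filter_upwards [hw] with φ' hφ'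
  rw [eq_div_iff (hpθpos w.1).ne', mul_comm]
  exact hφ'
end

section
/- For the linear regression model y_i = Σ_{j=1}^p x_{ij} θ_j + ε_i, ε_i i.i.d. N(0, σ²), with prior θ | σ², ψ, τ, φ ~ N_p(0, σ² D), D = diag(ψ_j τ² φ_j²), ψ_j i.i.d. Exp(1/2), τ ~ Ga(pa, 1/2), φ ~ Dir_p(a,…,a), and σ² ~ iGa(s, r), let p(θ, σ², ψ, τ, φ | y) be the joint posterior density. Define the transition density of the wrong-order Gibbs sampler (Algorithm 3) by K(x₀ ; x′) = p(θ′, σ²′ | ψ₀, τ₀, φ₀, y) · p(ψ′ | θ′, σ²′, τ₀, φ₀) · p(τ′ | θ′, σ²′, φ₀) · p(φ′ | θ′, σ²′), where each conditional density is the ratio of the appropriate joint posterior density to the corresponding marginal. Then the posterior is not invariant under K: the function x′ ↦ ∫ K(x₀ ; x′) p(x₀ | y) dx₀ differs from p(x′ | y) on a set of positive measure. -/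
/-!
Suppose the posterior were invariant. For fixed `(θ', σ²')`, the new weights `φ'` enter the kernel
`K` only through the last factor `p(φ' ∣ θ', σ²')`, which does not involve the old state `x₀`. It
can be pulled out of the integral over `x₀`, so `p` would be almost everywhere a product of a
function of `(θ', σ²', φ')` and a function of `(θ', σ²', ψ', τ')`. With a single weight (`k = 0`) the
vector `φ` is constant, and the same reasoning applied to `τ'`, which then enters only through
`p(τ' ∣ θ', σ²', φ₀)`, makes `p` a product of a function of `(θ', σ²', τ')` and one of
`(θ', σ²', ψ')`. Since integrals commute with multiplication by constants unconditionally, this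
step needs nothing about the integrability of `K` or of the marginals.

Such a product form is impossible. By `post_factor`, `ψ`, `τ` and `φ` interact in the posterior only
through `exp (-expo)`, with `expo = ∑ j, θ_j² / (2 σ² ψ_j τ² φ_j²)`. A product form almost everywhere
forces, by continuity, the mixed differences of `expo` to vanish everywhere
(`mixed_difference_eq_zero`). In the variables `τ` and `φ` this says that `expo` does not depend on
`φ`, contradicting its blow-up as a weight tends to `0` (`exists_expo_ne`); in the variables `ψ` and
`τ` with `φ = 1` it fails by direct evaluation.

The remaining point is that `p` is not identically zero, i.e. that the normalizing constant `Z` is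
the integral of an integrable function and is positive (`Z_pos`). The likelihood exponential is
bounded by `1`, the Gaussian prior of `θ` integrates to `1`, and what remains is a product of
integrable functions of `σ²`, `ψ`, `τ` and `φ`; for `φ`, integrability follows by stick breaking,
an induction on the dimension with the beta integral (`integrable_dirKernel`).
-/

open MeasureTheory Real Matrix
open scoped Classical

namespace DLLinearRegression

/-- The state space of the Gibbs sampler for the linear regression model with `p = k + 1`
regression coefficients: `(θ, σ², ψ, τ, u)`, where `θ ∈ ℝᵖ`, `σ² > 0`, `ψ ∈ (0,∞)ᵖ`,
`τ > 0` (the positivity constraints being enforced by the density), and the Dirichlet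
weights `φ` are parametrized by their first `p − 1 = k` coordinates `u`. -/
abbrev E (k : ℕ) := (Fin (k + 1) → ℝ) × ℝ × (Fin (k + 1) → ℝ) × ℝ × (Fin k → ℝ)

/-- The full simplex vector `φ = (u_1, …, u_k, 1 − Σ u_j)` from its free coordinates. -/
noncomputable def phiFull (k : ℕ) (u : Fin k → ℝ) : Fin (k + 1) → ℝ :=
  Fin.snoc u (1 - ∑ j, u j)

/-- Membership of the free coordinates in the open simplex. -/
def inSimplex (k : ℕ) (u : Fin k → ℝ) : Prop := (∀ j, 0 < u j) ∧ ∑ j, u j < 1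

/-- The unnormalized joint posterior density of `(θ, σ², ψ, τ, φ)` given the data `y` in the
linear regression model `y = Xθ + ε`, `ε_i ~ N(0, σ²)` i.i.d., under the prior
`θ ∣ σ², ψ, τ, φ ~ N_p(0, σ² D)` with `D = diag(ψ_j τ² φ_j²)`, `ψ_j ~ Exp(1/2)` i.i.d.,
`τ ~ Ga(pa, 1/2)`, `φ ~ Dir_p(a,…,a)`, and `σ² ~ iGa(s, r)`. -/
noncomputable def post (k nobs : ℕ) (a s r : ℝ) (X : Matrix (Fin nobs) (Fin (k + 1)) ℝ)
    (y : Fin nobs → ℝ) (x : E k) : ℝ :=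
  let θ := x.1; let σ2 := x.2.1; let ψ := x.2.2.1; let τ := x.2.2.2.1; let u := x.2.2.2.2
  let φ := phiFull k u
  (if 0 < σ2 ∧ (∀ j, 0 < ψ j) ∧ 0 < τ ∧ inSimplex k u then (1 : ℝ) else 0) *
    (∏ i, (2 * π * σ2) ^ (-(1 : ℝ) / 2) * Real.exp (-(y i - (X *ᵥ θ) i) ^ 2 / (2 * σ2))) *
    (∏ j, (2 * π * σ2 * ψ j * τ ^ 2 * φ j ^ 2) ^ (-(1 : ℝ) / 2) *
      Real.exp (-(θ j) ^ 2 / (2 * σ2 * ψ j * τ ^ 2 * φ j ^ 2))) *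
    (∏ j, (1 / 2 : ℝ) * Real.exp (-ψ j / 2)) *
    (((1 / 2 : ℝ) ^ (((k : ℝ) + 1) * a) / Real.Gamma (((k : ℝ) + 1) * a)) *
      τ ^ (((k : ℝ) + 1) * a - 1) * Real.exp (-τ / 2)) *
    ((Real.Gamma (((k : ℝ) + 1) * a) / ∏ _j : Fin (k + 1), Real.Gamma a) *
      ∏ j, φ j ^ (a - 1)) *
    ((r ^ s / Real.Gamma s) * σ2 ^ (-s - 1) * Real.exp (-r / σ2))

/-- The normalizing constant of the posterior. -/
noncomputable def Z (k nobs : ℕ) (a s r : ℝ) (X : Matrix (Fin nobs) (Fin (k + 1)) ℝ)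
    (y : Fin nobs → ℝ) : ℝ := ∫ x : E k, post k nobs a s r X y x

/-- The joint posterior density `p(θ, σ², ψ, τ, φ ∣ y)`. -/
noncomputable def p (k nobs : ℕ) (a s r : ℝ) (X : Matrix (Fin nobs) (Fin (k + 1)) ℝ)
    (y : Fin nobs → ℝ) (x : E k) : ℝ :=
  post k nobs a s r X y x / Z k nobs a s r X y

/-- Marginal posterior density `p(ψ, τ, φ ∣ y)`. -/
noncomputable def pψτφ (k nobs : ℕ) (a s r : ℝ) (X : Matrix (Fin nobs) (Fin (k + 1)) ℝ)
    (y : Fin nobs → ℝ) (ψ : Fin (k + 1) → ℝ) (τ : ℝ) (u : Fin k → ℝ) : ℝ :=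
  ∫ w : (Fin (k + 1) → ℝ) × ℝ, p k nobs a s r X y (w.1, w.2, ψ, τ, u)

/-- Marginal posterior density `p(θ, σ², τ, φ ∣ y)`. -/
noncomputable def pθστφ (k nobs : ℕ) (a s r : ℝ) (X : Matrix (Fin nobs) (Fin (k + 1)) ℝ)
    (y : Fin nobs → ℝ) (θ : Fin (k + 1) → ℝ) (σ2 τ : ℝ) (u : Fin k → ℝ) : ℝ :=
  ∫ ψ : Fin (k + 1) → ℝ, p k nobs a s r X y (θ, σ2, ψ, τ, u)

/-- Marginal posterior density `p(θ, σ², φ ∣ y)`. -/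
noncomputable def pθσφ (k nobs : ℕ) (a s r : ℝ) (X : Matrix (Fin nobs) (Fin (k + 1)) ℝ)
    (y : Fin nobs → ℝ) (θ : Fin (k + 1) → ℝ) (σ2 : ℝ) (u : Fin k → ℝ) : ℝ :=
  ∫ w : (Fin (k + 1) → ℝ) × ℝ, p k nobs a s r X y (θ, σ2, w.1, w.2, u)

/-- Marginal posterior density `p(θ, σ² ∣ y)`. -/
noncomputable def pθσ (k nobs : ℕ) (a s r : ℝ) (X : Matrix (Fin nobs) (Fin (k + 1)) ℝ)
    (y : Fin nobs → ℝ) (θ : Fin (k + 1) → ℝ) (σ2 : ℝ) : ℝ :=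
  ∫ w : (Fin (k + 1) → ℝ) × ℝ × (Fin k → ℝ), p k nobs a s r X y (θ, σ2, w.1, w.2.1, w.2.2)

/-- The transition density of the wrong-order Gibbs sampler (Algorithm 3):
`K(x₀ ; x′) = p(θ′, σ²′ ∣ ψ₀, τ₀, φ₀, y) · p(ψ′ ∣ θ′, σ²′, τ₀, φ₀) ·
 p(τ′ ∣ θ′, σ²′, φ₀) · p(φ′ ∣ θ′, σ²′)`,
each conditional density being the ratio of the appropriate joint posterior density to the
corresponding marginal. -/
noncomputable def K (k nobs : ℕ) (a s r : ℝ) (X : Matrix (Fin nobs) (Fin (k + 1)) ℝ)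
    (y : Fin nobs → ℝ) (x₀ x' : E k) : ℝ :=
  (p k nobs a s r X y (x'.1, x'.2.1, x₀.2.2.1, x₀.2.2.2.1, x₀.2.2.2.2) /
      pψτφ k nobs a s r X y x₀.2.2.1 x₀.2.2.2.1 x₀.2.2.2.2) *
    (p k nobs a s r X y (x'.1, x'.2.1, x'.2.2.1, x₀.2.2.2.1, x₀.2.2.2.2) /
      pθστφ k nobs a s r X y x'.1 x'.2.1 x₀.2.2.2.1 x₀.2.2.2.2) *
    (pθστφ k nobs a s r X y x'.1 x'.2.1 x'.2.2.2.1 x₀.2.2.2.2 /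
      pθσφ k nobs a s r X y x'.1 x'.2.1 x₀.2.2.2.2) *
    (pθσφ k nobs a s r X y x'.1 x'.2.1 x'.2.2.2.2 /
      pθσ k nobs a s r X y x'.1 x'.2.1)

/-! ### Dirichlet densities are integrable -/

/-- The unnormalized density of `Dir(a, …, a, b)` in its free coordinates. -/
noncomputable def dirKernel (k : ℕ) (a b : ℝ) (u : Fin k → ℝ) : ℝ :=
  if inSimplex k u then (∏ j, u j ^ (a - 1)) * (1 - ∑ j, u j) ^ (b - 1) else 0

lemma isOpen_inSimplex (k : ℕ) : IsOpen {u : Fin k → ℝ | inSimplex k u} := by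
  have h : {u : Fin k → ℝ | inSimplex k u} =
      (⋂ j, {u : Fin k → ℝ | 0 < u j}) ∩ {u | ∑ j, u j < 1} := by
    ext u; simp [inSimplex]
  rw [h]
  refine IsOpen.inter (isOpen_iInter_of_finite fun j => ?_) ?_
  · exact isOpen_lt (by fun_prop) (by fun_prop)
  · exact isOpen_lt (by fun_prop) (by fun_prop)

lemma measurable_dirKernel (k : ℕ) (a b : ℝ) : Measurable (dirKernel k a b) := by
  unfold dirKernel
  refine Measurable.ite (isOpen_inSimplex k).measurableSet ?_ measurable_const
  fun_prop

lemma dirKernel_nonneg (k : ℕ) (a b : ℝ) (u : Fin k → ℝ) : 0 ≤ dirKernel k a b u := by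
  unfold dirKernel
  split_ifs with h
  · have := h.1
    exact mul_nonneg (Finset.prod_nonneg fun j _ => (rpow_pos_of_pos (h.1 j) _).le)
      (rpow_nonneg (by linarith [h.2]) _)
  · exact le_rfl

lemma integrable_betaPDFReal {a b : ℝ} (ha : 0 < a) (hb : 0 < b) :
    Integrable (ProbabilityTheory.betaPDFReal a b) := by
  refine ⟨(ProbabilityTheory.measurable_betaPDFReal a b).aestronglyMeasurable, ?_⟩
  have h0 : ∀ x, 0 ≤ ProbabilityTheory.betaPDFReal a b x := by
    intro x
    by_cases hx : 0 < x ∧ x < 1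
    · exact (ProbabilityTheory.betaPDFReal_pos hx.1 hx.2 ha hb).le
    · simp [ProbabilityTheory.betaPDFReal, hx]
  rw [hasFiniteIntegral_iff_ofReal (Filter.Eventually.of_forall h0)]
  have := ProbabilityTheory.lintegral_betaPDF_eq_one ha hb
  simp only [ProbabilityTheory.betaPDF] at this
  rw [this]; exact ENNReal.one_lt_top

lemma integral_betaPDFReal {a b : ℝ} (ha : 0 < a) (hb : 0 < b) :
    ∫ x, ProbabilityTheory.betaPDFReal a b x = 1 := by
  have h0 : ∀ x, 0 ≤ ProbabilityTheory.betaPDFReal a b x := by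
    intro x
    by_cases hx : 0 < x ∧ x < 1
    · exact (ProbabilityTheory.betaPDFReal_pos hx.1 hx.2 ha hb).le
    · simp [ProbabilityTheory.betaPDFReal, hx]
  rw [integral_eq_lintegral_of_nonneg_ae (Filter.Eventually.of_forall h0)
    (ProbabilityTheory.measurable_betaPDFReal a b).aestronglyMeasurable]
  have := ProbabilityTheory.lintegral_betaPDF_eq_one ha hb
  simp only [ProbabilityTheory.betaPDF] at this
  rw [this]; simp

lemma inSimplex_cons (k : ℕ) (x : ℝ) (v : Fin k → ℝ) :
    inSimplex (k + 1) (Fin.cons x v) ↔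
      inSimplex k v ∧ 0 < x / (1 - ∑ j, v j) ∧ x / (1 - ∑ j, v j) < 1 := by
  simp only [inSimplex, Fin.forall_fin_succ, Fin.sum_univ_succ, Fin.cons_zero, Fin.cons_succ]
  constructor
  · rintro ⟨⟨hx, hv⟩, hs⟩
    have hc : 0 < 1 - ∑ j, v j := by linarith
    refine ⟨⟨hv, by linarith⟩, by positivity, ?_⟩
    rw [div_lt_one hc]; linarith
  · rintro ⟨⟨hv, hs⟩, h1, h2⟩
    have hc : 0 < 1 - ∑ j, v j := by linarith
    rw [div_lt_one hc] at h2
    exact ⟨⟨by simpa [div_pos_iff_of_pos_right hc] using h1, hv⟩, by linarith⟩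

/-- Stick breaking: splitting off one coordinate of a Dirichlet density leaves a scaled beta
density times a Dirichlet density of one dimension less. -/
lemma dirKernel_cons (k : ℕ) {a b : ℝ} (ha : 0 < a) (hb : 0 < b) (x : ℝ) (v : Fin k → ℝ) :
    dirKernel (k + 1) a b (Fin.cons x v) =
      ProbabilityTheory.beta a b * dirKernel k a (a + b) v *
        ((1 - ∑ j, v j)⁻¹ * ProbabilityTheory.betaPDFReal a b (x / (1 - ∑ j, v j))) := by
  have hB := (ProbabilityTheory.beta_pos ha hb).ne'
  by_cases hv : inSimplex k v
  swap
  · simp [dirKernel, inSimplex_cons, hv]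
  by_cases hx : 0 < x / (1 - ∑ j, v j) ∧ x / (1 - ∑ j, v j) < 1
  swap
  · simp only [dirKernel, inSimplex_cons, hv, hx, ProbabilityTheory.betaPDFReal]; simp
  simp only [dirKernel, inSimplex_cons, hv, hx, ProbabilityTheory.betaPDFReal]
  simp only [and_self, if_true, Fin.prod_univ_succ, Fin.sum_univ_succ, Fin.cons_zero,
    Fin.cons_succ]
  have hc : 0 < 1 - ∑ j, v j := by linarith [hv.2]
  obtain ⟨t, ht⟩ : ∃ t, t = x / (1 - ∑ j, v j) := ⟨_, rfl⟩
  have hxt : x = t * (1 - ∑ j, v j) := by rw [ht]; field_simp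
  rw [← ht] at hx ⊢
  have e : 1 - (x + ∑ j, v j) = (1 - t) * (1 - ∑ j, v j) := by rw [hxt]; ring
  rw [e, hxt, mul_rpow hx.1.le hc.le, mul_rpow (by linarith [hx.2]) hc.le,
    show a + b - 1 = (a - 1) + (b - 1) + 1 by ring, rpow_add hc, rpow_add hc, rpow_one]
  field_simp

lemma integrable_dirKernel {a : ℝ} (ha : 0 < a) (k : ℕ) :
    ∀ b : ℝ, 0 < b → Integrable (dirKernel k a b) := by
  induction k with
  | zero =>
    intro b _
    refine (integrable_const (dirKernel 0 a b default)).congr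
      (Filter.Eventually.of_forall fun u => ?_)
    rw [Subsingleton.elim u default]
  | succ k ih =>
    intro b hb
    have hmp := (volume_preserving_piFinSuccAbove (fun _ : Fin (k + 1) => ℝ) 0).symm
    rw [← hmp.integrable_comp_emb (MeasurableEquiv.measurableEmbedding _)]
    have hF : (dirKernel (k + 1) a b ∘
        (MeasurableEquiv.piFinSuccAbove (fun _ : Fin (k + 1) => ℝ) 0).symm) =
        fun z : ℝ × (Fin k → ℝ) => ProbabilityTheory.beta a b * dirKernel k a (a + b) z.2 *
        ((1 - ∑ j, z.2 j)⁻¹ * ProbabilityTheory.betaPDFReal a b (z.1 / (1 - ∑ j, z.2 j))) := by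
      funext z
      rw [← dirKernel_cons k ha hb]
      simp [MeasurableEquiv.piFinSuccAbove]
      rfl
    have hm : Measurable (dirKernel (k + 1) a b ∘
        (MeasurableEquiv.piFinSuccAbove (fun _ : Fin (k + 1) => ℝ) 0).symm) :=
      (measurable_dirKernel _ _ _).comp (MeasurableEquiv.measurable _)
    have hn : ∀ z, 0 ≤ (dirKernel (k + 1) a b ∘
        (MeasurableEquiv.piFinSuccAbove (fun _ : Fin (k + 1) => ℝ) 0).symm) z :=
      fun z => dirKernel_nonneg _ _ _ _
    refine (integrable_prod_iff' (μ := volume) (ν := volume) hm.aestronglyMeasurable).2 ⟨?_, ?_⟩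
    · refine Filter.Eventually.of_forall fun v => ?_
      rw [hF]
      by_cases hc : 1 - ∑ j, v j = 0
      · simp [hc]
      · exact (((integrable_betaPDFReal ha hb).comp_div hc).const_mul (1 - ∑ j, v j)⁻¹).const_mul
          (ProbabilityTheory.beta a b * dirKernel k a (a + b) v)
    · simp_rw [Real.norm_of_nonneg (hn _)]
      refine ((ih (a + b) (by positivity)).const_mul (ProbabilityTheory.beta a b)).congr
        (Filter.Eventually.of_forall fun v => ?_)
      rw [hF]
      simp only [integral_const_mul]
      by_cases hv : inSimplex k v
      · have hc : 0 < 1 - ∑ j, v j := by linarith [hv.2]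
        rw [Measure.integral_comp_div, integral_betaPDFReal ha hb, abs_of_pos hc]
        simp [hc.ne']
      · simp [dirKernel, hv]

/-! ### The posterior density is integrable with positive mass -/

lemma phiFull_castSucc (k : ℕ) (u : Fin k → ℝ) (j : Fin k) :
    phiFull k u j.castSucc = u j := by
  simp [phiFull]

lemma phiFull_last (k : ℕ) (u : Fin k → ℝ) :
    phiFull k u (Fin.last k) = 1 - ∑ j, u j := by
  simp [phiFull]

lemma phiFull_pos {k : ℕ} {u : Fin k → ℝ} (hu : inSimplex k u) (j : Fin (k + 1)) :
    0 < phiFull k u j := by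
  refine Fin.lastCases ?_ (fun i => ?_) j
  · rw [phiFull_last]; linarith [hu.2]
  · rw [phiFull_castSucc]; exact hu.1 i

lemma continuous_phiFull (k : ℕ) (j : Fin (k + 1)) : Continuous fun u => phiFull k u j := by
  refine Fin.lastCases ?_ (fun i => ?_) j
  · simp only [phiFull_last]; fun_prop
  · simp only [phiFull_castSucc]; fun_prop

lemma measurable_post (k nobs : ℕ) (a s r : ℝ) (X : Matrix (Fin nobs) (Fin (k + 1)) ℝ)
    (y : Fin nobs → ℝ) : Measurable (post k nobs a s r X y) := by
  have hφ : ∀ j, Measurable fun x : E k => phiFull k x.2.2.2.2 j := fun j =>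
    (continuous_phiFull k j).measurable.comp
      (by fun_prop : Measurable fun x : E k => x.2.2.2.2)
  have hX : ∀ i, Measurable fun x : E k => (X *ᵥ x.1) i := fun i => by
    simp only [Matrix.mulVec, dotProduct]; fun_prop
  have hdom : MeasurableSet {x : E k | 0 < x.2.1 ∧ (∀ j, 0 < x.2.2.1 j) ∧ 0 < x.2.2.2.1 ∧
      inSimplex k x.2.2.2.2} := by
    refine MeasurableSet.inter (measurableSet_lt measurable_const measurable_snd.fst) ?_
    refine MeasurableSet.inter ?_ ?_
    · have : {x : E k | ∀ j, 0 < x.2.2.1 j} = ⋂ j, {x : E k | 0 < x.2.2.1 j} := by ext; simp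
      change MeasurableSet {x : E k | ∀ j, 0 < x.2.2.1 j}
      rw [this]
      exact MeasurableSet.iInter fun j => measurableSet_lt measurable_const (by fun_prop)
    refine MeasurableSet.inter
      (measurableSet_lt measurable_const measurable_snd.snd.snd.fst) ?_
    exact (isOpen_inSimplex k).measurableSet.preimage
      (by fun_prop : Measurable fun x : E k => x.2.2.2.2)
  have hite : Measurable fun x : E k => if 0 < x.2.1 ∧ (∀ j, 0 < x.2.2.1 j) ∧ 0 < x.2.2.2.1 ∧
      inSimplex k x.2.2.2.2 then (1 : ℝ) else 0 :=
    Measurable.ite hdom measurable_const measurable_const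
  unfold post
  dsimp only
  fun_prop

lemma gauss_eq {v : ℝ} (hv : 0 < v) (x : ℝ) :
    (2 * π * v) ^ (-(1 : ℝ) / 2) * Real.exp (-x ^ 2 / (2 * v)) =
      ProbabilityTheory.gaussianPDFReal 0 v.toNNReal x := by
  rw [ProbabilityTheory.gaussianPDFReal, Real.coe_toNNReal _ hv.le, sub_zero,
    Real.sqrt_eq_rpow, ← Real.rpow_neg (by positivity)]
  norm_num

lemma lintegral_prod_gauss {k : ℕ} (v : Fin (k + 1) → ℝ) (hv : ∀ j, 0 < v j) :
    ∫⁻ θ : Fin (k + 1) → ℝ, ENNReal.ofReal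
      (∏ j, (2 * π * v j) ^ (-(1 : ℝ) / 2) * Real.exp (-(θ j) ^ 2 / (2 * v j))) = 1 := by
  simp_rw [gauss_eq (hv _)]
  rw [← ofReal_integral_eq_lintegral_ofReal]
  · rw [integral_fintype_prod_volume_eq_prod
      (fun j x => ProbabilityTheory.gaussianPDFReal 0 (v j).toNNReal x)]
    rw [Finset.prod_eq_one]
    · simp
    · intro j _
      exact ProbabilityTheory.integral_gaussianPDFReal_eq_one 0
        (by simpa using hv j)
  · exact Integrable.fintype_prod_dep
      (fun j => ProbabilityTheory.integrable_gaussianPDFReal 0 (v j).toNNReal)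
  · exact Filter.Eventually.of_forall fun θ => Finset.prod_nonneg fun j _ =>
      ProbabilityTheory.gaussianPDFReal_nonneg _ _ _

/-- The inverse gamma density, up to the normalizing constant, multiplied by the factor
`(2πσ²)^(-n/2)` of the Gaussian likelihood; extended by `0` to `σ² ≤ 0`. -/
noncomputable def sigmaKernel (nobs : ℕ) (s r σ2 : ℝ) : ℝ :=
  Set.indicator (Set.Ioi 0) (fun σ2 => ((2 * π * σ2) ^ (-(1 : ℝ) / 2)) ^ nobs *
    (σ2 ^ (-s - 1) * Real.exp (-r / σ2))) σ2

lemma integrable_sigmaKernel (nobs : ℕ) {s r : ℝ} (hs : 0 < s) (hr : 0 < r) :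
    Integrable (sigmaKernel nobs s r) := by
  unfold sigmaKernel
  rw [integrable_indicator_iff measurableSet_Ioi]
  have h1 : IntegrableOn (fun x : ℝ => x ^ ((nobs : ℝ) / 2 + s - 1) * Real.exp (-r * x ^ (1 : ℝ)))
      (Set.Ioi 0) :=
    integrableOn_rpow_mul_exp_neg_mul_rpow
      (by have : (0 : ℝ) ≤ (nobs : ℝ) / 2 := by positivity
          linarith) one_pos hr
  -- the substitution `σ² ↦ 1 / σ²` turns the inverse gamma density into the gamma density
  rw [← integrableOn_Ioi_comp_rpow_iff' _ (show (-1 : ℝ) ≠ 0 by norm_num)] at h1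
  refine IntegrableOn.congr_fun (h1.const_mul (((2 * π) ^ (-(1 : ℝ) / 2)) ^ nobs)) ?_
    measurableSet_Ioi
  intro x hx
  have hx : 0 < x := hx
  have e1 : (x ^ (-(1 : ℝ) / 2)) ^ nobs = x ^ (-((nobs : ℝ) / 2)) := by
    rw [← rpow_natCast, ← rpow_mul hx.le]; congr 1; ring
  simp only [smul_eq_mul]
  rw [mul_rpow (by positivity) hx.le, mul_pow, e1, rpow_one, ← rpow_mul hx.le, rpow_neg_one,
    ← mul_assoc (x ^ _) (x ^ _), ← rpow_add hx, mul_assoc, ← mul_assoc (x ^ _) (x ^ _),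
    ← rpow_add hx, div_eq_mul_inv]
  congr 3
  ring

/-- The density of `Exp(1/2)` on the whole line. -/
noncomputable def psiKernel (t : ℝ) : ℝ :=
  Set.indicator (Set.Ioi 0) (fun t => (1 / 2 : ℝ) * Real.exp (-t / 2)) t

lemma integrable_psiKernel : Integrable psiKernel := by
  unfold psiKernel
  rw [integrable_indicator_iff measurableSet_Ioi]
  have h : IntegrableOn (fun t : ℝ => Real.exp (-(1 / 2 : ℝ) * t)) (Set.Ioi 0) :=
    integrableOn_exp_mul_Ioi (by norm_num) 0
  refine IntegrableOn.congr_fun (h.const_mul (1 / 2)) (fun t _ => ?_) measurableSet_Ioi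
  congr 2; ring

/-- The density of `Ga(c, 1/2)` on the whole line, up to the normalizing constant. -/
noncomputable def tauKernel (c t : ℝ) : ℝ :=
  Set.indicator (Set.Ioi 0) (fun t => t ^ (c - 1) * Real.exp (-t / 2)) t

lemma integrable_tauKernel {c : ℝ} (hc : 0 < c) : Integrable (tauKernel c) := by
  unfold tauKernel
  rw [integrable_indicator_iff measurableSet_Ioi]
  have h : IntegrableOn (fun x : ℝ => x ^ (c - 1) * Real.exp (-(1 / 2) * x ^ (1 : ℝ)))
      (Set.Ioi 0) :=
    integrableOn_rpow_mul_exp_neg_mul_rpow (by linarith) one_pos (by norm_num)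
  refine h.congr_fun (fun t _ => ?_) measurableSet_Ioi
  simp only [rpow_one]
  congr 2; ring

/-- The constant collecting the normalizing factors of the gamma, Dirichlet and inverse gamma
priors. -/
noncomputable def priorConst (k : ℕ) (a s r : ℝ) : ℝ :=
  ((1 / 2 : ℝ) ^ (((k : ℝ) + 1) * a) / Real.Gamma (((k : ℝ) + 1) * a)) *
    (Real.Gamma (((k : ℝ) + 1) * a) / ∏ _j : Fin (k + 1), Real.Gamma a) * (r ^ s / Real.Gamma s)

lemma priorConst_pos (k : ℕ) {a s r : ℝ} (ha : 0 < a) (hs : 0 < s) (hr : 0 < r) :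
    0 < priorConst k a s r := by
  have h1 : 0 < Real.Gamma (((k : ℝ) + 1) * a) := Real.Gamma_pos_of_pos (by positivity)
  have h2 := Real.Gamma_pos_of_pos ha
  have h3 := Real.Gamma_pos_of_pos hs
  unfold priorConst
  positivity

/-- The prior density of `(σ², ψ, τ, φ)` without its constant `priorConst`, multiplied by the factor
`(2πσ²)^(-n/2)` of the likelihood. -/
noncomputable def restKernel (k nobs : ℕ) (a s r : ℝ)
    (w : ℝ × (Fin (k + 1) → ℝ) × ℝ × (Fin k → ℝ)) : ℝ :=
  sigmaKernel nobs s r w.1 * ((∏ j, psiKernel (w.2.1 j)) *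
    (tauKernel (((k : ℝ) + 1) * a) w.2.2.1 * dirKernel k a a w.2.2.2))

lemma integrable_restKernel (k nobs : ℕ) {a s r : ℝ} (ha : 0 < a) (hs : 0 < s) (hr : 0 < r) :
    Integrable (restKernel k nobs a s r) := by
  have h1 := integrable_sigmaKernel nobs hs hr
  have h2 : Integrable fun ψ : Fin (k + 1) → ℝ => ∏ j, psiKernel (ψ j) :=
    Integrable.fintype_prod (fun _ => integrable_psiKernel)
  have h3 := integrable_tauKernel (c := ((k : ℝ) + 1) * a) (by positivity)
  have h4 := integrable_dirKernel ha k a ha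
  exact h1.mul_prod (h2.mul_prod (h3.mul_prod h4))

/-- The parameter constraints; `post` is positive exactly where they hold. -/
def Dom (k : ℕ) (σ2 : ℝ) (ψ : Fin (k + 1) → ℝ) (τ : ℝ) (u : Fin k → ℝ) : Prop :=
  0 < σ2 ∧ (∀ j, 0 < ψ j) ∧ 0 < τ ∧ inSimplex k u

lemma post_of_not_dom (k nobs : ℕ) (a s r : ℝ) (X : Matrix (Fin nobs) (Fin (k + 1)) ℝ)
    (y : Fin nobs → ℝ) (θ : Fin (k + 1) → ℝ) {σ2 : ℝ} {ψ : Fin (k + 1) → ℝ} {τ : ℝ}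
    {u : Fin k → ℝ} (h : ¬ Dom k σ2 ψ τ u) : post k nobs a s r X y (θ, σ2, ψ, τ, u) = 0 := by
  unfold Dom at h
  simp [post, h]

/-- On its support, the posterior density is the likelihood exponential, times `restKernel`
up to the constant, times the Gaussian prior density of `θ`. -/
lemma post_of_dom (k nobs : ℕ) (a s r : ℝ) (X : Matrix (Fin nobs) (Fin (k + 1)) ℝ)
    (y : Fin nobs → ℝ) (θ : Fin (k + 1) → ℝ) {σ2 : ℝ} {ψ : Fin (k + 1) → ℝ} {τ : ℝ}
    {u : Fin k → ℝ} (h : Dom k σ2 ψ τ u) : post k nobs a s r X y (θ, σ2, ψ, τ, u) =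
      (∏ i, Real.exp (-(y i - (X *ᵥ θ) i) ^ 2 / (2 * σ2))) *
      (priorConst k a s r * restKernel k nobs a s r (σ2, ψ, τ, u)) *
      (∏ j, (2 * π * (σ2 * ψ j * τ ^ 2 * phiFull k u j ^ 2)) ^ (-(1 : ℝ) / 2) *
        Real.exp (-(θ j) ^ 2 / (2 * (σ2 * ψ j * τ ^ 2 * phiFull k u j ^ 2)))) := by
  have h' := h
  obtain ⟨h1, h2, h3, h4⟩ := h'
  have hd : dirKernel k a a u = ∏ j, phiFull k u j ^ (a - 1) := by
    rw [Fin.prod_univ_castSucc]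
    simp [dirKernel, h4, phiFull_castSucc, phiFull_last]
  have hp : ∏ j, psiKernel (ψ j) = ∏ j, (1 / 2 : ℝ) * Real.exp (-ψ j / 2) :=
    Finset.prod_congr rfl fun j _ => by simp [psiKernel, h2 j]
  have ht : tauKernel (((k : ℝ) + 1) * a) τ = τ ^ (((k : ℝ) + 1) * a - 1) * Real.exp (-τ / 2) := by
    simp [tauKernel, h3]
  have hσ : sigmaKernel nobs s r σ2 = ((2 * π * σ2) ^ (-(1 : ℝ) / 2)) ^ nobs *
      (σ2 ^ (-s - 1) * Real.exp (-r / σ2)) := by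
    simp [sigmaKernel, h1]
  have hg : (∏ j, (2 * π * σ2 * ψ j * τ ^ 2 * phiFull k u j ^ 2) ^ (-(1 : ℝ) / 2) *
        Real.exp (-(θ j) ^ 2 / (2 * σ2 * ψ j * τ ^ 2 * phiFull k u j ^ 2))) =
      ∏ j, (2 * π * (σ2 * ψ j * τ ^ 2 * phiFull k u j ^ 2)) ^ (-(1 : ℝ) / 2) *
        Real.exp (-(θ j) ^ 2 / (2 * (σ2 * ψ j * τ ^ 2 * phiFull k u j ^ 2))) :=
    Finset.prod_congr rfl fun j _ => by simp only [mul_assoc]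
  unfold Dom at h
  simp only [post, restKernel, if_pos h]
  rw [hd, hp, ht, hσ, hg, Finset.prod_mul_distrib (f := fun _ => (2 * π * σ2) ^ (-(1 : ℝ) / 2))]
  simp only [Finset.prod_const, Finset.card_univ, Fintype.card_fin, priorConst]
  ring

lemma restKernel_pos (k nobs : ℕ) (a s r : ℝ) {σ2 : ℝ} {ψ : Fin (k + 1) → ℝ} {τ : ℝ}
    {u : Fin k → ℝ} (h : Dom k σ2 ψ τ u) : 0 < restKernel k nobs a s r (σ2, ψ, τ, u) := by
  obtain ⟨h1, h2, h3, h4⟩ := h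
  have hs := h4.2
  have hc : 0 < 1 - ∑ j, u j := by linarith
  have e1 : 0 < sigmaKernel nobs s r σ2 := by
    simp only [sigmaKernel, Set.mem_Ioi, h1, Set.indicator_of_mem]; positivity
  have e2 : 0 < ∏ j, psiKernel (ψ j) := Finset.prod_pos fun j _ => by
    simp only [psiKernel, Set.mem_Ioi, h2 j, Set.indicator_of_mem]; positivity
  have e3 : 0 < tauKernel (((k : ℝ) + 1) * a) τ := by
    simp only [tauKernel, Set.mem_Ioi, h3, Set.indicator_of_mem]; positivity
  have e4 : 0 < dirKernel k a a u := by
    simp only [dirKernel, h4, if_true]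
    exact mul_pos (Finset.prod_pos fun j _ => rpow_pos_of_pos (h4.1 j) _) (rpow_pos_of_pos hc _)
  unfold restKernel
  positivity

lemma post_pos_of_dom (k nobs : ℕ) {a s r : ℝ} (ha : 0 < a) (hs : 0 < s) (hr : 0 < r)
    (X : Matrix (Fin nobs) (Fin (k + 1)) ℝ)
    (y : Fin nobs → ℝ) (θ : Fin (k + 1) → ℝ) {σ2 : ℝ} {ψ : Fin (k + 1) → ℝ} {τ : ℝ}
    {u : Fin k → ℝ} (h : Dom k σ2 ψ τ u) : 0 < post k nobs a s r X y (θ, σ2, ψ, τ, u) := by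
  rw [post_of_dom k nobs a s r X y θ h]
  have e1 := restKernel_pos k nobs a s r h
  have e2 := priorConst_pos k ha hs hr
  obtain ⟨h1, h2, h3, h4⟩ := h
  have e3 : 0 < ∏ j, (2 * π * (σ2 * ψ j * τ ^ 2 * phiFull k u j ^ 2)) ^ (-(1 : ℝ) / 2) *
        Real.exp (-(θ j) ^ 2 / (2 * (σ2 * ψ j * τ ^ 2 * phiFull k u j ^ 2))) :=
    Finset.prod_pos fun j _ => by
      have := phiFull_pos h4 j
      have := h2 j
      positivity
  positivity

lemma post_nonneg (k nobs : ℕ) {a s r : ℝ} (ha : 0 < a) (hs : 0 < s) (hr : 0 < r)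
    (X : Matrix (Fin nobs) (Fin (k + 1)) ℝ) (y : Fin nobs → ℝ) (x : E k) :
    0 ≤ post k nobs a s r X y x := by
  obtain ⟨θ, σ2, ψ, τ, u⟩ := x
  by_cases h : Dom k σ2 ψ τ u
  · exact (post_pos_of_dom k nobs ha hs hr X y θ h).le
  · exact (post_of_not_dom k nobs a s r X y θ h).ge

/-- Bounding the likelihood exponential by `1` and integrating out the Gaussian prior of `θ`. -/
lemma lintegral_post_le (k nobs : ℕ) {a s r : ℝ} (ha : 0 < a) (hs : 0 < s) (hr : 0 < r)
    (X : Matrix (Fin nobs) (Fin (k + 1)) ℝ) (y : Fin nobs → ℝ)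
    (w : ℝ × (Fin (k + 1) → ℝ) × ℝ × (Fin k → ℝ)) :
    ∫⁻ θ, ENNReal.ofReal (post k nobs a s r X y (θ, w)) ≤
      ENNReal.ofReal (priorConst k a s r * restKernel k nobs a s r w) := by
  obtain ⟨σ2, ψ, τ, u⟩ := w
  by_cases h : Dom k σ2 ψ τ u
  swap
  · simp [post_of_not_dom k nobs a s r X y _ h]
  have hR : 0 ≤ priorConst k a s r * restKernel k nobs a s r (σ2, ψ, τ, u) :=
    (mul_pos (priorConst_pos k ha hs hr) (restKernel_pos k nobs a s r h)).le
  have hv : ∀ j, 0 < σ2 * ψ j * τ ^ 2 * phiFull k u j ^ 2 := fun j => by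
    have := phiFull_pos h.2.2.2 j
    have := h.2.1 j
    have := h.1
    have := h.2.2.1
    positivity
  calc _ ≤ ∫⁻ θ : Fin (k + 1) → ℝ, ENNReal.ofReal (priorConst k a s r * restKernel k nobs a s r (σ2, ψ, τ, u)) *
        ENNReal.ofReal
          (∏ j, (2 * π * (σ2 * ψ j * τ ^ 2 * phiFull k u j ^ 2)) ^ (-(1 : ℝ) / 2) *
        Real.exp (-(θ j) ^ 2 / (2 * (σ2 * ψ j * τ ^ 2 * phiFull k u j ^ 2)))) := by
        refine lintegral_mono fun θ => ?_
        rw [← ENNReal.ofReal_mul hR]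
        refine ENNReal.ofReal_le_ofReal ?_
        rw [post_of_dom k nobs a s r X y θ h]
        refine mul_le_mul_of_nonneg_right ?_ (Finset.prod_nonneg fun j _ => ?_)
        · refine mul_le_of_le_one_left hR (Finset.prod_le_one (fun _ _ => (exp_pos _).le) ?_)
          intro i _
          rw [Real.exp_le_one_iff]
          exact div_nonpos_of_nonpos_of_nonneg (by nlinarith [sq_nonneg (y i - (X *ᵥ θ) i)])
            (by linarith [h.1])
        · have := hv j
          positivity
    _ = _ := by
        rw [lintegral_const_mul' _ _ ENNReal.ofReal_ne_top, lintegral_prod_gauss _ hv, mul_one]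

lemma integrable_post (k nobs : ℕ) {a s r : ℝ} (ha : 0 < a) (hs : 0 < s) (hr : 0 < r)
    (X : Matrix (Fin nobs) (Fin (k + 1)) ℝ) (y : Fin nobs → ℝ) :
    Integrable (post k nobs a s r X y) := by
  have hm := measurable_post k nobs a s r X y
  refine ⟨hm.aestronglyMeasurable, ?_⟩
  rw [hasFiniteIntegral_iff_ofReal
    (Filter.Eventually.of_forall (post_nonneg k nobs ha hs hr X y))]
  have h0 : ∫⁻ x : E k, ENNReal.ofReal (post k nobs a s r X y x) =
      ∫⁻ w, ∫⁻ θ, ENNReal.ofReal (post k nobs a s r X y (θ, w)) :=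
    lintegral_prod_symm (μ := volume) (ν := volume) _ hm.ennreal_ofReal.aemeasurable
  rw [h0]
  refine (lintegral_mono (lintegral_post_le k nobs ha hs hr X y)).trans_lt ?_
  have hi := (integrable_restKernel k nobs ha hs hr).const_mul (priorConst k a s r)
  exact hi.lintegral_lt_top

lemma isOpenPosMeasure_prod (α β : Type*) [TopologicalSpace α] [TopologicalSpace β]
    [MeasureSpace α] [MeasureSpace β] [SFinite (volume : Measure β)]
    (_ : (volume : Measure α).IsOpenPosMeasure) (_ : (volume : Measure β).IsOpenPosMeasure) :
    (volume : Measure (α × β)).IsOpenPosMeasure :=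
  inferInstanceAs (Measure.prod volume volume).IsOpenPosMeasure

lemma Z_pos (k nobs : ℕ) {a s r : ℝ} (ha : 0 < a) (hs : 0 < s) (hr : 0 < r)
    (X : Matrix (Fin nobs) (Fin (k + 1)) ℝ) (y : Fin nobs → ℝ) :
    0 < Z k nobs a s r X y := by
  unfold Z
  rw [integral_pos_iff_support_of_nonneg (post_nonneg k nobs ha hs hr X y)
    (integrable_post k nobs ha hs hr X y)]
  have hO : IsOpen ((Set.univ : Set (Fin (k + 1) → ℝ)) ×ˢ Set.Ioi (0 : ℝ) ×ˢ
      (Set.univ.pi fun _ : Fin (k + 1) => Set.Ioi (0 : ℝ)) ×ˢ Set.Ioi (0 : ℝ) ×ˢ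
      {u : Fin k → ℝ | inSimplex k u}) :=
    isOpen_univ.prod (isOpen_Ioi.prod ((isOpen_set_pi Set.finite_univ fun _ _ => isOpen_Ioi).prod
      (isOpen_Ioi.prod (isOpen_inSimplex k))))
  have : (volume : Measure (E k)).IsOpenPosMeasure :=
    isOpenPosMeasure_prod _ _ inferInstance (isOpenPosMeasure_prod _ _ inferInstance
      (isOpenPosMeasure_prod _ _ inferInstance (isOpenPosMeasure_prod _ _ inferInstance
        inferInstance)))
  refine (hO.measure_pos volume ?_).trans_le (measure_mono ?_)
  · refine ⟨(0, 1, fun _ => 1, 1, fun _ => 1 / ((k : ℝ) + 1)), ?_⟩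
    simp only [Set.mem_prod, Set.mem_univ, Set.mem_Ioi, Set.mem_pi, Set.mem_ofPred_eq, inSimplex,
      Finset.sum_const, Finset.card_univ, Fintype.card_fin, nsmul_eq_mul]
    refine ⟨trivial, one_pos, fun _ _ => one_pos, one_pos, fun _ => by positivity, ?_⟩
    rw [mul_one_div, div_lt_one (by positivity)]
    linarith
  · rintro ⟨θ, σ2, ψ, τ, u⟩ ⟨-, h1, h2, h3, h4⟩
    exact (post_pos_of_dom k nobs ha hs hr X y θ ⟨h1, fun j => h2 j trivial, h3, h4⟩).ne'

/-! ### Product form of the posterior and mixed differences of its exponent -/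

/-- The exponent of the Gaussian prior of `θ`, up to sign. This is the only term of the posterior
density in which `ψ`, `τ` and `φ` interact. -/
noncomputable def expo (k : ℕ) (θ : Fin (k + 1) → ℝ) (σ2 : ℝ) (ψ : Fin (k + 1) → ℝ) (τ : ℝ)
    (u : Fin k → ℝ) : ℝ :=
  ∑ j, θ j ^ 2 / (2 * (σ2 * ψ j * τ ^ 2 * phiFull k u j ^ 2))

lemma post_factor (k nobs : ℕ) (a s r : ℝ) (X : Matrix (Fin nobs) (Fin (k + 1)) ℝ)
    (y : Fin nobs → ℝ) :
    ∃ (α : (Fin (k + 1) → ℝ) → ℝ → ℝ) (β : (Fin (k + 1) → ℝ) → ℝ) (γ : ℝ → ℝ)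
      (δ : (Fin k → ℝ) → ℝ), ∀ θ σ2 ψ τ u, Dom k σ2 ψ τ u →
      post k nobs a s r X y (θ, σ2, ψ, τ, u) =
        α θ σ2 * β ψ * γ τ * δ u * Real.exp (-expo k θ σ2 ψ τ u) := by
  refine ⟨fun θ σ2 => (∏ i, Real.exp (-(y i - (X *ᵥ θ) i) ^ 2 / (2 * σ2))) *
      priorConst k a s r * sigmaKernel nobs s r σ2 *
        ∏ _j : Fin (k + 1), ((2 * π) ^ (-(1 : ℝ) / 2) * σ2 ^ (-(1 : ℝ) / 2)),
    fun ψ => (∏ j, psiKernel (ψ j)) * ∏ j, ψ j ^ (-(1 : ℝ) / 2),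
    fun τ => tauKernel (((k : ℝ) + 1) * a) τ * ∏ _j : Fin (k + 1), (τ ^ 2) ^ (-(1 : ℝ) / 2),
    fun u => dirKernel k a a u * ∏ j, (phiFull k u j ^ 2) ^ (-(1 : ℝ) / 2), ?_⟩
  intro θ σ2 ψ τ u h
  rw [post_of_dom k nobs a s r X y θ h]
  have e1 : (∏ j, (2 * π * (σ2 * ψ j * τ ^ 2 * phiFull k u j ^ 2)) ^ (-(1 : ℝ) / 2) *
        Real.exp (-(θ j) ^ 2 / (2 * (σ2 * ψ j * τ ^ 2 * phiFull k u j ^ 2)))) =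
      (∏ _j : Fin (k + 1), ((2 * π) ^ (-(1 : ℝ) / 2) * σ2 ^ (-(1 : ℝ) / 2))) *
      (∏ j, ψ j ^ (-(1 : ℝ) / 2)) * (∏ _j : Fin (k + 1), (τ ^ 2) ^ (-(1 : ℝ) / 2)) *
      (∏ j, (phiFull k u j ^ 2) ^ (-(1 : ℝ) / 2)) * Real.exp (-expo k θ σ2 ψ τ u) := by
    rw [expo, ← Finset.sum_neg_distrib, Real.exp_sum, ← Finset.prod_mul_distrib,
      ← Finset.prod_mul_distrib, ← Finset.prod_mul_distrib, ← Finset.prod_mul_distrib]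
    refine Finset.prod_congr rfl fun j _ => ?_
    have h1 := h.1
    have h2 := h.2.1 j
    have h3 := h.2.2.1
    rw [mul_rpow (x := 2 * π) (by positivity) (by positivity),
      mul_rpow (x := σ2 * ψ j * τ ^ 2) (by positivity) (by positivity),
      mul_rpow (x := σ2 * ψ j) (by positivity) (by positivity),
      mul_rpow (x := σ2) (by positivity) (by positivity), neg_div _ (θ j ^ 2)]
    ring
  rw [e1]
  simp only [restKernel]
  ring

/-- If `exp (-c)` is almost everywhere a product of a function of `v` and a function of `u`, then
the continuous function `c` is additive: its mixed differences vanish everywhere. -/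
lemma mixed_difference_eq_zero {V U : Type*} [TopologicalSpace V] [TopologicalSpace U]
    [MeasurableSpace V] [MeasurableSpace U] [OpensMeasurableSpace V] [OpensMeasurableSpace U]
    (μ : Measure V) (ν : Measure U) [μ.IsOpenPosMeasure] [ν.IsOpenPosMeasure]
    {S : Set V} {T : Set U} (hS : IsOpen S) (hT : IsOpen T) (c : V → U → ℝ)
    (hcV : ∀ u ∈ T, ContinuousOn (fun v => c v u) S) (hcU : ∀ v ∈ S, ContinuousOn (c v) T)
    (G : V → ℝ) (A : U → ℝ)
    (h : ∀ᵐ v ∂μ, ∀ᵐ u ∂ν, v ∈ S → u ∈ T → Real.exp (-c v u) = A u * G v) :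
    ∀ v₁ ∈ S, ∀ v₂ ∈ S, ∀ u₁ ∈ T, ∀ u₂ ∈ T, c v₁ u₁ + c v₂ u₂ = c v₂ u₁ + c v₁ u₂ := by
  have key : ∀ᵐ v₁ ∂μ, v₁ ∈ S → ∀ᵐ v₂ ∂μ, v₂ ∈ S → ∀ u₁ ∈ T, ∀ u₂ ∈ T,
      c v₁ u₁ + c v₂ u₂ = c v₂ u₁ + c v₁ u₂ := by
    filter_upwards [h] with v₁ hv₁ hv₁S
    filter_upwards [h] with v₂ hv₂ hv₂S
    have h12 : ∀ᵐ u₁ ∂ν, u₁ ∈ T → ∀ᵐ u₂ ∂ν, u₂ ∈ T →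
        c v₁ u₁ + c v₂ u₂ = c v₂ u₁ + c v₁ u₂ := by
      filter_upwards [hv₁, hv₂] with u₁ h11 h21 hu₁
      filter_upwards [hv₁, hv₂] with u₂ h12 h22 hu₂
      have : Real.exp (-(c v₁ u₁ + c v₂ u₂)) = Real.exp (-(c v₂ u₁ + c v₁ u₂)) := by
        rw [neg_add, neg_add, Real.exp_add, Real.exp_add, h11 hv₁S hu₁, h22 hv₂S hu₂,
          h21 hv₂S hu₁, h12 hv₁S hu₂]
        ring
      exact neg_injective (Real.exp_injective this)
    have h12' : ∀ᵐ u₁ ∂ν, u₁ ∈ T → ∀ u₂ ∈ T,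
        c v₁ u₁ + c v₂ u₂ = c v₂ u₁ + c v₁ u₂ := by
      filter_upwards [h12] with u₁ hu₁ hu₁T
      have := hcU v₁ hv₁S
      have := hcU v₂ hv₂S
      exact Measure.eqOn_open_of_ae_eq ((ae_restrict_iff' hT.measurableSet).2 (hu₁ hu₁T)) hT
        (by fun_prop) (by fun_prop)
    intro u₁ hu₁ u₂ hu₂
    refine Measure.eqOn_open_of_ae_eq (μ := ν) (U := T) (f := fun u₁ => c v₁ u₁ + c v₂ u₂)
      (g := fun u₁ => c v₂ u₁ + c v₁ u₂) ((ae_restrict_iff' hT.measurableSet).2 ?_) hT ?_ ?_ hu₁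
    · filter_upwards [h12'] with u hu huT using hu huT u₂ hu₂
    · exact (hcU v₁ hv₁S).add continuousOn_const
    · exact (hcU v₂ hv₂S).add continuousOn_const
  intro v₁ hv₁ v₂ hv₂ u₁ hu₁ u₂ hu₂
  refine Measure.eqOn_open_of_ae_eq (μ := μ) (U := S) (f := fun v₁ => c v₁ u₁ + c v₂ u₂)
    (g := fun v₁ => c v₂ u₁ + c v₁ u₂) ((ae_restrict_iff' hS.measurableSet).2 ?_) hS
    ((hcV u₁ hu₁).add continuousOn_const) (continuousOn_const.add (hcV u₂ hu₂)) hv₁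
  filter_upwards [key] with v₁ hk hv₁
  refine Measure.eqOn_open_of_ae_eq (μ := μ) (U := S) (f := fun v₂ => c v₁ u₁ + c v₂ u₂)
    (g := fun v₂ => c v₂ u₁ + c v₁ u₂) ((ae_restrict_iff' hS.measurableSet).2 ?_) hS
    (continuousOn_const.add (hcV u₂ hu₂)) ((hcV u₁ hu₁).add continuousOn_const) hv₂
  filter_upwards [hk hv₁] with v₂ hk2 hv₂ using hk2 hv₂ u₁ hu₁ u₂ hu₂

lemma exists_mem_open_of_ae {α : Type*} [TopologicalSpace α] [MeasurableSpace α] {μ : Measure α}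
    [μ.IsOpenPosMeasure] {P : α → Prop} (h : ∀ᵐ x ∂μ, P x) {O : Set α} (hO : IsOpen O)
    (hne : O.Nonempty) : ∃ x ∈ O, P x := by
  obtain ⟨x, hx, hP⟩ := (Measure.dense_of_ae h).inter_open_nonempty O hO hne
  exact ⟨x, hx, hP⟩

lemma continuousOn_expo_tau (k : ℕ) (θ : Fin (k + 1) → ℝ) {σ2 : ℝ} {ψ : Fin (k + 1) → ℝ}
    {u : Fin k → ℝ} (hσ : 0 < σ2) (hψ : ∀ j, 0 < ψ j) (hu : inSimplex k u) :
    ContinuousOn (fun τ => expo k θ σ2 ψ τ u) (Set.Ioi 0) := by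
  unfold expo
  refine continuousOn_finsetSum _ fun j _ => ContinuousOn.div (by fun_prop) (by fun_prop) ?_
  intro τ hτ
  have : 0 < τ := hτ
  have := phiFull_pos hu j
  have := hψ j
  positivity

lemma continuousOn_expo_u (k : ℕ) (θ : Fin (k + 1) → ℝ) {σ2 : ℝ} {ψ : Fin (k + 1) → ℝ}
    {τ : ℝ} (hσ : 0 < σ2) (hψ : ∀ j, 0 < ψ j) (hτ : 0 < τ) :
    ContinuousOn (fun u => expo k θ σ2 ψ τ u) {u | inSimplex k u} := by
  unfold expo
  refine continuousOn_finsetSum _ fun j _ => ContinuousOn.div (by fun_prop) ?_ ?_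
  · have := continuous_phiFull k j
    fun_prop
  intro u hu
  have := phiFull_pos hu j
  have := hψ j
  positivity

lemma continuousOn_expo_psi (k : ℕ) (θ : Fin (k + 1) → ℝ) {σ2 τ : ℝ}
    {u : Fin k → ℝ} (hσ : 0 < σ2) (hτ : 0 < τ) (hu : inSimplex k u) :
    ContinuousOn (fun ψ => expo k θ σ2 ψ τ u) {ψ | ∀ j, 0 < ψ j} := by
  unfold expo
  refine continuousOn_finsetSum _ fun j _ => ContinuousOn.div (by fun_prop) (by fun_prop) ?_
  intro ψ hψ
  have := phiFull_pos hu j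
  have : 0 < ψ j := hψ j
  positivity

lemma isOpen_psi (k : ℕ) : IsOpen {ψ : Fin (k + 1) → ℝ | ∀ j, 0 < ψ j} := by
  have : {ψ : Fin (k + 1) → ℝ | ∀ j, 0 < ψ j} = ⋂ j, {ψ | 0 < ψ j} := by ext; simp
  rw [this]
  exact isOpen_iInter_of_finite fun j => isOpen_lt (by fun_prop) (by fun_prop)

lemma inSimplex_const {k : ℕ} {ε : ℝ} (h0 : 0 < ε) (h1 : ε ≤ 1 / ((k : ℝ) + 1)) :
    inSimplex k (fun _ => ε) := by
  refine ⟨fun _ => h0, ?_⟩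
  rw [le_div_iff₀ (by positivity)] at h1
  simp only [Finset.sum_const, Finset.card_univ, Fintype.card_fin, nsmul_eq_mul]
  linarith

/-- The exponent is not constant in `φ` when there are at least two weights: it blows up as the
first weight tends to `0`. -/
lemma exists_expo_ne (m : ℕ) (θ : Fin (m + 2) → ℝ) {σ2 : ℝ} {ψ : Fin (m + 2) → ℝ}
    (hθ : θ 0 ≠ 0) (hσ : 0 < σ2) (hψ : ∀ j, 0 < ψ j) :
    ∃ u₁ u₂, inSimplex (m + 1) u₁ ∧ inSimplex (m + 1) u₂ ∧
      expo (m + 1) θ σ2 ψ 1 u₁ ≠ expo (m + 1) θ σ2 ψ 1 u₂ := by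
  have hnn : ∀ u, inSimplex (m + 1) u → ∀ j : Fin (m + 2),
      0 ≤ θ j ^ 2 / (2 * (σ2 * ψ j * 1 ^ 2 * phiFull (m + 1) u j ^ 2)) := by
    intro u hu j
    have := phiFull_pos hu j
    have := hψ j
    positivity
  set ε₀ : ℝ := 1 / (((m + 1 : ℕ) : ℝ) + 1) with hε₀
  have hε₀pos : 0 < ε₀ := by positivity
  have hε₀le : ε₀ ≤ 1 := by
    rw [hε₀, div_le_one (by positivity)]
    have : (0 : ℝ) ≤ ((m + 1 : ℕ) : ℝ) := by positivity
    linarith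
  set B := expo (m + 1) θ σ2 ψ 1 (fun _ => ε₀) with hB
  have hBnn : 0 ≤ B := Finset.sum_nonneg fun j _ => hnn _ (inSimplex_const hε₀pos le_rfl) j
  set b := θ 0 ^ 2 / (2 * (σ2 * ψ 0)) with hb
  have hbpos : 0 < b := by
    have := hψ 0
    positivity
  -- `ε = ε₀ t` satisfies `B ε² ≤ B t < b`
  set t := b / (b + B) with ht
  have htpos : 0 < t := by positivity
  have ht1 : t ≤ 1 := by rw [ht, div_le_one (by positivity)]; linarith
  have hBt : B * t < b := by
    rw [ht, mul_div_assoc', div_lt_iff₀ (by positivity)]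
    nlinarith
  have hεle : ε₀ * t ≤ ε₀ := mul_le_of_le_one_right hε₀pos.le ht1
  have hin := inSimplex_const (k := m + 1) (mul_pos hε₀pos htpos) hεle
  refine ⟨_, _, hin, inSimplex_const hε₀pos le_rfl, ?_⟩
  refine ne_of_gt ?_
  have h1 : b / (ε₀ * t) ^ 2 ≤ expo (m + 1) θ σ2 ψ 1 (fun _ => ε₀ * t) := by
    have := Finset.single_le_sum (fun j _ => hnn _ hin j) (Finset.mem_univ (0 : Fin (m + 2)))
    refine le_trans (le_of_eq ?_) this
    have e : phiFull (m + 1) (fun _ => ε₀ * t) 0 = ε₀ * t :=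
      phiFull_castSucc (m + 1) (fun _ => ε₀ * t) 0
    rw [e, hb, div_div]
    congr 1
    ring
  refine lt_of_lt_of_le ?_ h1
  rw [lt_div_iff₀ (by positivity)]
  have h2 : (ε₀ * t) ^ 2 ≤ t := by
    have : ε₀ * t ≤ t := mul_le_of_le_one_left htpos.le hε₀le
    have h3 : 0 < ε₀ * t := by positivity
    nlinarith
  nlinarith

/-! ### Failure of invariance -/

/-- The linear regression analogue of Proposition 1: the posterior is not invariant under
the wrong-order Gibbs kernel of Algorithm 3; the function `x′ ↦ ∫ K(x₀ ; x′) p(x₀ ∣ y) dx₀`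
differs from `p(x′ ∣ y)` on a set of positive Lebesgue measure. -/
theorem wrong_order_gibbs_not_invariant_regression (k nobs : ℕ) (a s r : ℝ)
    (ha : 0 < a) (hs : 0 < s) (hr : 0 < r)
    (X : Matrix (Fin nobs) (Fin (k + 1)) ℝ) (y : Fin nobs → ℝ) :
    volume {x' : E k |
      (∫ x₀ : E k, K k nobs a s r X y x₀ x' * p k nobs a s r X y x₀) ≠
        p k nobs a s r X y x'} ≠ 0 := by
  intro hvol
  have H : ∀ᵐ x' : E k, (∫ x₀ : E k, K k nobs a s r X y x₀ x' * p k nobs a s r X y x₀) =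
      p k nobs a s r X y x' := by
    rw [ae_iff]; exact hvol
  have H1 : ∀ᵐ θ : Fin (k + 1) → ℝ, ∀ᵐ σ2 : ℝ, ∀ᵐ ψ : Fin (k + 1) → ℝ, ∀ᵐ τ : ℝ,
      ∀ᵐ u : Fin k → ℝ,
      (∫ x₀ : E k, K k nobs a s r X y x₀ (θ, σ2, ψ, τ, u) * p k nobs a s r X y x₀) =
      p k nobs a s r X y (θ, σ2, ψ, τ, u) := by
    filter_upwards [Measure.ae_ae_of_ae_prod H] with θ h1
    filter_upwards [Measure.ae_ae_of_ae_prod h1] with σ2 h2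
    filter_upwards [Measure.ae_ae_of_ae_prod h2] with ψ h3
    exact Measure.ae_ae_of_ae_prod h3
  obtain ⟨θ, hθ, H2⟩ := exists_mem_open_of_ae H1 (O := {θ | θ 0 ≠ 0})
    (isOpen_ne_fun (by fun_prop) (by fun_prop)) ⟨fun _ => 1, by simp⟩
  obtain ⟨σ2, hσ, H3⟩ := exists_mem_open_of_ae H2 (O := Set.Ioi 0) isOpen_Ioi ⟨1, by simp⟩
  replace hθ : θ 0 ≠ 0 := hθ
  replace hσ : 0 < σ2 := hσ
  have hZ := Z_pos k nobs ha hs hr X y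
  obtain ⟨α, β, γ, δ, hf⟩ := post_factor k nobs a s r X y
  have hp : ∀ ψ τ u, Dom k σ2 ψ τ u → p k nobs a s r X y (θ, σ2, ψ, τ, u) =
      α θ σ2 * β ψ * γ τ * δ u * Real.exp (-expo k θ σ2 ψ τ u) / Z k nobs a s r X y :=
    fun ψ τ u h => by rw [p, hf θ σ2 ψ τ u h]
  have hne : ∀ ψ τ u, Dom k σ2 ψ τ u →
      α θ σ2 ≠ 0 ∧ β ψ ≠ 0 ∧ γ τ ≠ 0 ∧ δ u ≠ 0 := by
    intro ψ τ u h
    have h1 := (post_pos_of_dom k nobs ha hs hr X y θ h).ne'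
    rw [hf θ σ2 ψ τ u h] at h1
    simp only [ne_eq, mul_eq_zero, not_or] at h1
    tauto
  rcases k with _ | m
  · -- A single weight: `K` depends on `τ'` only through `p(τ' ∣ θ', σ²', φ)`.
    have hu0 : inSimplex 0 (default : Fin 0 → ℝ) := by simp [inSimplex]
    have hphi : phiFull 0 (default : Fin 0 → ℝ) 0 = 1 := by
      have := phiFull_last 0 (default : Fin 0 → ℝ)
      simpa using this
    have hc := mixed_difference_eq_zero volume volume (isOpen_psi 0) (isOpen_Ioi (a := (0 : ℝ)))
      (fun ψ τ => expo 0 θ σ2 ψ τ default)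
      (fun τ hτ => continuousOn_expo_psi 0 θ hσ hτ hu0)
      (fun ψ hψ => continuousOn_expo_tau 0 θ hσ hψ hu0)
      (fun ψ => (∫ x₀ : E 0,
        ((p 0 nobs a s r X y (θ, σ2, x₀.2.2.1, x₀.2.2.2.1, default) /
          pψτφ 0 nobs a s r X y x₀.2.2.1 x₀.2.2.2.1 default) *
        (p 0 nobs a s r X y (θ, σ2, ψ, x₀.2.2.2.1, default) /
          pθστφ 0 nobs a s r X y θ σ2 x₀.2.2.2.1 default)) *
        p 0 nobs a s r X y x₀) * Z 0 nobs a s r X y / (α θ σ2 * β ψ * δ default))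
      (fun τ => (pθστφ 0 nobs a s r X y θ σ2 τ default / pθσφ 0 nobs a s r X y θ σ2 default) *
        (pθσφ 0 nobs a s r X y θ σ2 default / pθσ 0 nobs a s r X y θ σ2) / γ τ) ?_
    · have h := hc (fun _ => 1) (by simp) (fun _ => 2) (by simp) 1 (by simp) 2 (by simp)
      have hexpo : ∀ ψ τ, expo 0 θ σ2 ψ τ default = θ 0 ^ 2 / (2 * (σ2 * ψ 0 * τ ^ 2)) := by
        intro ψ τ
        unfold expo
        rw [Fin.sum_univ_castSucc, Fin.sum_univ_zero, zero_add]
        change θ 0 ^ 2 / (2 * (σ2 * ψ 0 * τ ^ 2 * phiFull 0 default 0 ^ 2)) = _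
        rw [hphi, one_pow, mul_one]
      simp only [hexpo] at h
      field_simp at h
      norm_num at h
    · filter_upwards [H3] with ψ h3
      filter_upwards [h3] with τ h4 hψ hτ
      obtain ⟨u, -, h5⟩ := exists_mem_open_of_ae h4 isOpen_univ ⟨default, trivial⟩
      obtain rfl : u = default := Subsingleton.elim _ _
      have hD : Dom 0 σ2 ψ τ default := ⟨hσ, hψ, hτ, hu0⟩
      obtain ⟨n1, n2, n3, n4⟩ := hne ψ τ default hD
      rw [hp ψ τ default hD] at h5
      have hK : ∀ x₀ : E 0, K 0 nobs a s r X y x₀ (θ, σ2, ψ, τ, default) *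
          p 0 nobs a s r X y x₀ =
          ((pθστφ 0 nobs a s r X y θ σ2 τ default / pθσφ 0 nobs a s r X y θ σ2 default) *
          (pθσφ 0 nobs a s r X y θ σ2 default / pθσ 0 nobs a s r X y θ σ2)) *
          (((p 0 nobs a s r X y (θ, σ2, x₀.2.2.1, x₀.2.2.2.1, default) /
          pψτφ 0 nobs a s r X y x₀.2.2.1 x₀.2.2.2.1 default) *
          (p 0 nobs a s r X y (θ, σ2, ψ, x₀.2.2.2.1, default) /
          pθστφ 0 nobs a s r X y θ σ2 x₀.2.2.2.1 default)) *
          p 0 nobs a s r X y x₀) := by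
        intro x₀
        have e : x₀.2.2.2.2 = default := Subsingleton.elim _ _
        simp only [K, e]
        ring
      simp only [hK] at h5
      rw [integral_const_mul, eq_div_iff hZ.ne'] at h5
      rw [div_mul_div_comm, eq_div_iff (by positivity)]
      linear_combination -h5
  · -- Several weights: `K` depends on `φ'` only through `p(φ' ∣ θ', σ²')`.
    obtain ⟨ψ, hψ, H4⟩ := exists_mem_open_of_ae H3 (isOpen_psi (m + 1)) ⟨fun _ => 1, by simp⟩
    have hψ : ∀ j, 0 < ψ j := hψ
    have hc := mixed_difference_eq_zero volume volume (isOpen_Ioi (a := (0 : ℝ)))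
      (isOpen_inSimplex (m + 1))
      (fun τ u => expo (m + 1) θ σ2 ψ τ u)
      (fun u hu => continuousOn_expo_tau (m + 1) θ hσ hψ hu)
      (fun τ hτ => continuousOn_expo_u (m + 1) θ hσ hψ hτ)
      (fun τ => (∫ x₀ : E (m + 1),
        ((p (m + 1) nobs a s r X y (θ, σ2, x₀.2.2.1, x₀.2.2.2.1, x₀.2.2.2.2) /
          pψτφ (m + 1) nobs a s r X y x₀.2.2.1 x₀.2.2.2.1 x₀.2.2.2.2) *
        (p (m + 1) nobs a s r X y (θ, σ2, ψ, x₀.2.2.2.1, x₀.2.2.2.2) /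
          pθστφ (m + 1) nobs a s r X y θ σ2 x₀.2.2.2.1 x₀.2.2.2.2) *
        (pθστφ (m + 1) nobs a s r X y θ σ2 τ x₀.2.2.2.2 /
          pθσφ (m + 1) nobs a s r X y θ σ2 x₀.2.2.2.2)) *
        p (m + 1) nobs a s r X y x₀) * Z (m + 1) nobs a s r X y / (α θ σ2 * β ψ * γ τ))
      (fun u => (pθσφ (m + 1) nobs a s r X y θ σ2 u / pθσ (m + 1) nobs a s r X y θ σ2) / δ u) ?_
    · obtain ⟨u₁, u₂, hu₁, hu₂, hne12⟩ := exists_expo_ne m θ hθ hσ hψ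
      have h := hc 1 (by simp) 2 (by simp) u₁ hu₁ u₂ hu₂
      have hscale : ∀ u, expo (m + 1) θ σ2 ψ 2 u = expo (m + 1) θ σ2 ψ 1 u / 4 := by
        intro u
        simp only [expo, Finset.sum_div]
        refine Finset.sum_congr rfl fun j _ => ?_
        rw [div_div]
        congr 1
        ring
      rw [hscale, hscale] at h
      apply hne12
      linarith
    · filter_upwards [H4] with τ h3
      filter_upwards [h3] with u h5 hτ hu
      have hD : Dom (m + 1) σ2 ψ τ u := ⟨hσ, hψ, hτ, hu⟩
      obtain ⟨n1, n2, n3, n4⟩ := hne ψ τ u hD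
      rw [hp ψ τ u hD] at h5
      have hK : ∀ x₀ : E (m + 1), K (m + 1) nobs a s r X y x₀ (θ, σ2, ψ, τ, u) *
          p (m + 1) nobs a s r X y x₀ =
          (pθσφ (m + 1) nobs a s r X y θ σ2 u / pθσ (m + 1) nobs a s r X y θ σ2) *
          (((p (m + 1) nobs a s r X y (θ, σ2, x₀.2.2.1, x₀.2.2.2.1, x₀.2.2.2.2) /
          pψτφ (m + 1) nobs a s r X y x₀.2.2.1 x₀.2.2.2.1 x₀.2.2.2.2) *
          (p (m + 1) nobs a s r X y (θ, σ2, ψ, x₀.2.2.2.1, x₀.2.2.2.2) /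
          pθστφ (m + 1) nobs a s r X y θ σ2 x₀.2.2.2.1 x₀.2.2.2.2) *
          (pθστφ (m + 1) nobs a s r X y θ σ2 τ x₀.2.2.2.2 /
          pθσφ (m + 1) nobs a s r X y θ σ2 x₀.2.2.2.2)) *
          p (m + 1) nobs a s r X y x₀) := by
        intro x₀
        simp only [K]
        ring
      simp only [hK] at h5
      rw [integral_const_mul, eq_div_iff hZ.ne'] at h5
      rw [div_mul_div_comm, eq_div_iff (by positivity)]
      linear_combination -h5

end DLLinearRegression
end

section
/- Let a > 0, n ≥ 1, and t ∈ ℝⁿ with t_i ≠ 0 for all i. Consider the measure on (0,∞)ⁿ obtained by multiplying the n-fold product of the Ga(a, 1/2) distribution by the density (δ_1,…,δ_n) ↦ ∏_{i=1}^n (2δ_i)^{−1} exp(−|t_i|/δ_i). After normalization, this measure equals the product measure ⊗_{i=1}^n GiG(a − 1, 1, 2|t_i|). In other words, under prior δ_1,…,δ_n i.i.d. Ga(a, 1/2) and likelihood θ_i | δ conditionally independent Laplace with scale δ_i, the conditional distribution of (δ_1,…,δ_n) given θ = t is a product measure: the δ_i are conditionally independent given θ, with δ_i | θ ~ GiG(a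 − 1, 1, 2|θ_i|). -/
/-!
Both sides are computed through the one-dimensional unnormalized posteriors
`ν i = Ga(a, 1/2) · Laplace(t i)`.

* Bayes' rule in one dimension: `x^{a-1} e^{-x/2} · (2x)⁻¹ e^{-|t|/x}` is a positive constant times
  `x^{a-2} e^{-(x + 2|t|/x)/2}`, so `GiG (a - 1) 1 (2 * |t i|)` is the normalization of `ν i`
  (`GiG_eq_normalized`).
* The likelihood factorizes over coordinates and the prior is a product, so the joint unnormalized
  posterior is `⊗ᵢ ν i` (`pi_withDensity_prod`).
* Each `ν i` has finite nonzero mass: the likelihood is bounded because `u e^{-u} ≤ e^{-1}`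
  (this needs `t i ≠ 0`), and it is positive on `(0, ∞)`. Hence normalization commutes with
  finite products (`normalize_pi`).
-/

open MeasureTheory Real ProbabilityTheory

/-- The generalized inverse Gaussian distribution `GiG(ν, γ, ξ)` on `(0,∞)`, defined as the
normalization of the measure with unnormalized density `x ↦ x^{ν−1} exp{−(γx + ξ/x)/2}`. -/
noncomputable def GiG (ν γ ξ : ℝ) : Measure ℝ :=
  let m : Measure ℝ := (volume.restrict (Set.Ioi 0)).withDensity fun x =>
    ENNReal.ofReal (x ^ (ν - 1) * Real.exp (-(γ * x + ξ / x) / 2))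
  (m Set.univ)⁻¹ • m

open scoped ENNReal

/-- Likelihood of an observation with absolute value `s` under the Laplace distribution with
scale `x`; for `x ≤ 0` it takes the value `0`. -/
noncomputable def laplaceLik (s x : ℝ) : ℝ≥0∞ :=
  ENNReal.ofReal ((2 * x)⁻¹ * Real.exp (-s / x))

lemma measurable_laplaceLik (s : ℝ) : Measurable (laplaceLik s) := by
  unfold laplaceLik
  fun_prop

lemma laplaceLik_le {s : ℝ} (hs : 0 < s) (x : ℝ) :
    laplaceLik s x ≤ ENNReal.ofReal ((2 * s)⁻¹ * Real.exp (-1)) := by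
  apply ENNReal.ofReal_le_ofReal
  rcases le_or_gt x 0 with hx | hx
  · have h : (2 * x)⁻¹ ≤ 0 := inv_nonpos.2 (by linarith)
    exact (mul_nonpos_of_nonpos_of_nonneg h (Real.exp_pos _).le).trans (by positivity)
  · have h := mul_le_mul_of_nonneg_left (Real.mul_exp_neg_le_exp_neg_one (s / x))
      (by positivity : 0 ≤ (2 * s)⁻¹)
    refine le_trans (le_of_eq ?_) h
    rw [neg_div]
    field_simp

/-- A gamma distribution is carried by the positive half-line. -/
lemma ae_pos_gammaMeasure (a r : ℝ) : ∀ᵐ x ∂gammaMeasure a r, 0 < x := by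
  have hm : Measurable (gammaPDF a r) := (measurable_gammaPDFReal a r).ennreal_ofReal
  rw [gammaMeasure, ae_withDensity_iff hm]
  have h0 : ∀ᵐ x : ℝ, x ≠ 0 := by simp [ae_iff]
  filter_upwards [h0] with x hx h
  by_contra hneg
  exact h (gammaPDF_of_neg (lt_of_le_of_ne (not_lt.1 hneg) hx))

/-- Bayes' rule in one dimension, before normalization. -/
lemma gamma_withDensity_laplaceLik {a : ℝ} (ha : 0 < a) (s : ℝ) :
    (gammaMeasure a (1 / 2)).withDensity (laplaceLik s) =
      ENNReal.ofReal ((1 / 2) ^ a / Real.Gamma a / 2) •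
        (volume.restrict (Set.Ioi 0)).withDensity fun x =>
          ENNReal.ofReal (x ^ (a - 1 - 1) * Real.exp (-(1 * x + 2 * s / x) / 2)) := by
  have hm : Measurable (gammaPDF a (1 / 2)) := (measurable_gammaPDFReal _ _).ennreal_ofReal
  have hG : 0 < Real.Gamma a := Real.Gamma_pos_of_pos ha
  rw [← withDensity_smul' _ _ ENNReal.ofReal_ne_top, gammaMeasure,
    ← withDensity_mul _ hm (measurable_laplaceLik s), ← withDensity_indicator measurableSet_Ioi]
  apply withDensity_congr_ae
  have h0 : ∀ᵐ x : ℝ, x ≠ 0 := by simp [ae_iff]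
  filter_upwards [h0] with x hx
  rcases lt_or_gt_of_ne hx with hx | hx
  · simp [gammaPDF_of_neg hx, hx.le]
  · rw [Set.indicator_of_mem (Set.mem_Ioi.2 hx)]
    simp only [Pi.mul_apply, Pi.smul_apply, smul_eq_mul, laplaceLik, gammaPDF_of_nonneg hx.le]
    rw [← ENNReal.ofReal_mul (by positivity), ← ENNReal.ofReal_mul (by positivity)]
    congr 1
    have he : Real.exp (-(1 * x + 2 * s / x) / 2) =
        Real.exp (-(1 / 2 * x)) * Real.exp (-s / x) := by
      rw [← Real.exp_add]
      congr 1
      field_simp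
      ring
    rw [he, Real.rpow_sub_one hx.ne' (a - 1)]
    field_simp

/-- Rescaling by a finite nonzero constant does not affect normalization. -/
lemma normalize_smul {α : Type*} [MeasurableSpace α] (μ : Measure α) {c : ℝ≥0∞}
    (hc : c ≠ 0) (hc' : c ≠ ∞) :
    ((c • μ) Set.univ)⁻¹ • (c • μ) = (μ Set.univ)⁻¹ • μ := by
  rw [smul_smul, Measure.smul_apply, smul_eq_mul,
    ENNReal.mul_inv (Or.inl hc) (Or.inl hc'), mul_right_comm, ENNReal.inv_mul_cancel hc hc',
    one_mul]

lemma GiG_eq_normalized {a : ℝ} (ha : 0 < a) (s : ℝ) :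
    GiG (a - 1) 1 (2 * s) =
      ((gammaMeasure a (1 / 2)).withDensity (laplaceLik s) Set.univ)⁻¹ •
        (gammaMeasure a (1 / 2)).withDensity (laplaceLik s) := by
  have hG : 0 < Real.Gamma a := Real.Gamma_pos_of_pos ha
  rw [gamma_withDensity_laplaceLik ha, normalize_smul _ _ ENNReal.ofReal_ne_top]
  · rfl
  · exact (ENNReal.ofReal_pos.2 (by positivity)).ne'

/-- A product density on a product of probability measures gives the product of the
one-dimensional measures with density. -/
lemma pi_withDensity_prod {ι : Type*} [Fintype ι] {α : ι → Type*} [∀ i, MeasurableSpace (α i)]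
    (μ : ∀ i, Measure (α i)) [∀ i, IsProbabilityMeasure (μ i)] (f : ∀ i, α i → ℝ≥0∞)
    (hf : ∀ i, Measurable (f i)) [∀ i, SigmaFinite ((μ i).withDensity (f i))] :
    (Measure.pi μ).withDensity (fun x => ∏ i, f i (x i)) =
      Measure.pi fun i => (μ i).withDensity (f i) := by
  refine (Measure.pi_eq fun s hs => ?_).symm
  have hg : ∀ i, Measurable ((s i).indicator (f i)) := fun i => (hf i).indicator (hs i)
  have hind : (Set.univ.pi s).indicator (fun x => ∏ i, f i (x i)) =
      fun x => ∏ i, (s i).indicator (f i) (x i) := by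
    classical
    ext x
    by_cases hx : x ∈ Set.univ.pi s
    · rw [Set.indicator_of_mem hx]
      exact Finset.prod_congr rfl fun i _ => (Set.indicator_of_mem (hx i trivial) _).symm
    · rw [Set.indicator_of_notMem hx]
      obtain ⟨i, hi⟩ : ∃ i, x i ∉ s i := by simpa [Set.mem_pi] using hx
      exact (Finset.prod_eq_zero (Finset.mem_univ i) (Set.indicator_of_notMem hi _)).symm
  rw [withDensity_apply _ (MeasurableSet.univ_pi hs), ← lintegral_indicator
    (MeasurableSet.univ_pi hs), hind,
    lintegral_prod_eq_prod_lintegral_of_indepFun Finset.univ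
      (fun i (x : ∀ i, α i) => (s i).indicator (f i) (x i))
      (iIndepFun_pi fun i => (hg i).aemeasurable)
      (fun i => (hg i).comp (measurable_pi_apply i))]
  refine Finset.prod_congr rfl fun i _ => ?_
  rw [(measurePreserving_eval μ i).lintegral_comp (hg i), lintegral_indicator (hs i),
    withDensity_apply _ (hs i)]

/-- Normalization commutes with finite products of finite nonzero measures. -/
lemma normalize_pi {ι : Type*} [Fintype ι] {α : ι → Type*} [∀ i, MeasurableSpace (α i)]
    (ν : ∀ i, Measure (α i)) [∀ i, IsFiniteMeasure (ν i)] (h0 : ∀ i, ν i Set.univ ≠ 0) :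
    (Measure.pi ν Set.univ)⁻¹ • Measure.pi ν =
      Measure.pi fun i => (ν i Set.univ)⁻¹ • ν i := by
  have hfin : ∀ i, IsFiniteMeasure ((ν i Set.univ)⁻¹ • ν i) := fun i =>
    (ν i).smul_finite (ENNReal.inv_ne_top.2 (h0 i))
  refine (Measure.pi_eq fun s hs => ?_).symm
  simp only [Measure.smul_apply, smul_eq_mul, Measure.pi_univ, Measure.pi_pi,
    Finset.prod_mul_distrib]
  rw [ENNReal.prod_inv_distrib]
  exact fun i _ j _ _ => Or.inl (h0 i)

/-- Under the prior `δ_1, …, δ_n` i.i.d. `Ga(a, 1/2)` and a likelihood in which the `θ_i`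
are conditionally independent Laplace with scales `δ_i`, observed at `t` with all `t_i ≠ 0`,
the conditional distribution of `(δ_1, …, δ_n)` given `θ = t` — i.e. the normalization of
the `n`-fold product of `Ga(a, 1/2)` multiplied by the density
`δ ↦ ∏_i (2δ_i)^{−1} exp(−|t_i|/δ_i)` — is the product measure `⊗_i GiG(a−1, 1, 2|t_i|)`:
the `δ_i` remain independent a posteriori, with `δ_i | θ ~ GiG(a−1, 1, 2|θ_i|)`. -/
theorem dl_deltas_conditionally_independent_gig (a : ℝ) (ha : 0 < a) (n : ℕ) (hn : 1 ≤ n)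
    (t : Fin n → ℝ) (ht : ∀ i, t i ≠ 0) :
    ∀ m : Measure (Fin n → ℝ),
      m = (Measure.pi fun _ : Fin n => gammaMeasure a (1 / 2)).withDensity
        (fun δ => ENNReal.ofReal (∏ i, (2 * δ i)⁻¹ * Real.exp (-|t i| / δ i))) →
      (m Set.univ)⁻¹ • m = Measure.pi fun i : Fin n => GiG (a - 1) 1 (2 * |t i|) := by
  rintro m rfl
  have hprob : IsProbabilityMeasure (gammaMeasure a (1 / 2)) :=
    isProbabilityMeasure_gammaMeasure ha (by norm_num)
  have hfin : ∀ i, IsFiniteMeasure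
      ((gammaMeasure a (1 / 2)).withDensity (laplaceLik |t i|)) := fun i =>
    isFiniteMeasure_withDensity (by
      refine ((lintegral_mono (laplaceLik_le (abs_pos.2 (ht i)))).trans_lt ?_).ne
      rw [lintegral_const, measure_univ, mul_one]
      exact ENNReal.ofReal_lt_top)
  have h0 : ∀ i, (gammaMeasure a (1 / 2)).withDensity (laplaceLik |t i|) Set.univ ≠ 0 := by
    intro i h
    rw [Measure.measure_univ_eq_zero,
      withDensity_eq_zero_iff (measurable_laplaceLik _).aemeasurable] at h
    obtain ⟨x, hx, hpos⟩ := (h.and (ae_pos_gammaMeasure a (1 / 2))).exists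
    exact (ENNReal.ofReal_pos.2 (by positivity)).ne' hx
  -- The real product splits into extended nonnegative factors only where all `δ i` are positive,
  -- which is almost everywhere for the prior.
  have hae : (fun δ : Fin n → ℝ =>
      ENNReal.ofReal (∏ i, (2 * δ i)⁻¹ * Real.exp (-|t i| / δ i)))
      =ᵐ[Measure.pi fun _ : Fin n => gammaMeasure a (1 / 2)]
      fun δ => ∏ i, laplaceLik |t i| (δ i) := by
    have hpos : ∀ᵐ δ ∂(Measure.pi fun _ : Fin n => gammaMeasure a (1 / 2)), ∀ i, 0 < δ i :=
      Filter.eventually_all.2 fun i =>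
        (Measure.tendsto_eval_ae_ae (i := i)).eventually (ae_pos_gammaMeasure a (1 / 2))
    filter_upwards [hpos] with δ hδ
    refine ENNReal.ofReal_prod_of_nonneg fun i _ => ?_
    have := hδ i
    positivity
  rw [withDensity_congr_ae hae,
    pi_withDensity_prod (fun _ => gammaMeasure a (1 / 2)) (fun i => laplaceLik |t i|)
      (fun i => measurable_laplaceLik _), normalize_pi _ h0]
  simp only [GiG_eq_normalized ha]
end
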